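/- arXiv:2405.19239 — 2 statements merged into one kernel-verified Lean document; each statement's English description precedes it below -/
import Mathlib

section
/- Let f ∈ R := MvPolynomial ℂ (Fin 2), let m, n : ℕ with 2 ≤ m < n, and let y ∈ ℂ⟦T⟧ with ord y = n, such that y is reduced with respect to m (there exists i with coeff_i(y) ≠ 0 and ¬ (m ∣ i)). Set x := T^m, φ := MvPolynomial.aeval ![x, y], and assume φ f = 0 and φ(f_y) ≠ 0. Let λ be the supremum over all (B,C) ∈ ℂ² of ord(T^(2m) + y² + 2·B·T^m + 2·C·y) (a finite natural number). Then ord(φ(v_f)) + 3·(m − 1) + 3 = ord(φ(i_f)) + 3·ord(φ(f_y)) + λ, an equality in ℕ∞ with all terms finite. -/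
open MvPolynomial

noncomputable section

/-- Partial derivative with respect to the first variable `X`. -/
def dx (f : MvPolynomial (Fin 2) ℂ) : MvPolynomial (Fin 2) ℂ := pderiv 0 f

/-- Partial derivative with respect to the second variable `Y`. -/
def dy (f : MvPolynomial (Fin 2) ℂ) : MvPolynomial (Fin 2) ℂ := pderiv 1 f

/-- The inflection polynomial `i_f = f_y²·f_xx − 2·f_x·f_y·f_xy + f_x²·f_yy`. -/
def infl (f : MvPolynomial (Fin 2) ℂ) : MvPolynomial (Fin 2) ℂ :=
  (dy f) ^ 2 * dx (dx f) - 2 * dx f * dy f * dy (dx f) + (dx f) ^ 2 * dy (dy f)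

/-- The vertex polynomial
`v_f = (f_x² + f_y²)(f_x³ f_yyy − 3 f_x² f_y f_xyy + 3 f_x f_y² f_xxy − f_y³ f_xxx)
      − 3((f_x² − f_y²) f_xy − f_x f_y (f_xx − f_yy)) · i_f`. -/
def vert (f : MvPolynomial (Fin 2) ℂ) : MvPolynomial (Fin 2) ℂ :=
  ((dx f) ^ 2 + (dy f) ^ 2) *
      ((dx f) ^ 3 * dy (dy (dy f)) - 3 * (dx f) ^ 2 * dy f * dy (dy (dx f)) +
        3 * dx f * (dy f) ^ 2 * dy (dx (dx f)) - (dy f) ^ 3 * dx (dx (dx f))) -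
    3 * (((dx f) ^ 2 - (dy f) ^ 2) * dy (dx f) - dx f * dy f * (dx (dx f) - dy (dy f))) *
      infl f

/-- The canonical map from polynomials to formal power series in two variables. -/
def ι : MvPolynomial (Fin 2) ℂ →+* MvPowerSeries (Fin 2) ℂ :=
  MvPolynomial.coeToMvPowerSeries.ringHom

/-- The local intersection number at the origin of the curves `g = 0` and `h = 0`:
the `ℂ`-dimension of `ℂ⟦x,y⟧/⟨g,h⟩`. -/
def interMult (g h : MvPolynomial (Fin 2) ℂ) : ℕ :=
  Module.finrank ℂ (MvPowerSeries (Fin 2) ℂ ⧸ Ideal.span {ι g, ι h})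

end

/-!
The Hamiltonian field `H = f_y ∂/∂x - f_x ∂/∂y` is tangent to `f = 0`, and `-i_f` and `2 v_f` are
the numerators, computed with `H` as time derivative, of the curvature of the coordinate curve and
of twice the derivative of that curvature. Along `γ = (x, y)` the field `H` becomes
`(f_y ∘ γ / θx) θ` with `θ = T d/dT`; the two numerators are homogeneous of weights 3 and 6 under
such a change of time, so `i_f ∘ γ` and `v_f ∘ γ` are `(f_y ∘ γ / θx) ^ 3` and
`(f_y ∘ γ / θx) ^ 6` times the numerators for `θ`, up to constants.

The numerators for `θ` are, up to sign, the Wronskians of `θx, θy` and of `θx, θy, θg`, where `g`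
is the equation of *any* circle through the origin along `γ`. A Wronskian for `θ` of series with
distinct orders has the sum of these orders as its order, the leading coefficient being a
Vandermonde determinant. Choosing `g` of order different from those of `x` and `y` makes the second
order `ord x + ord y + ord g`, and such a circle has maximal contact, since changing the circle
adds a linear combination of `x` and `y`.

The contact is finite because `T ↦ ζT`, with `ζ` a primitive `m`-th root of unity, fixes `T ^ m`:
a circle containing the branch would force `y` to be a series in `T ^ m`.
-/

section Brackets

variable {R A B : Type*} [CommRing R] [CommRing A] [CommRing B] [Algebra R A] [Algebra R B]

/-- The first Rankin–Cohen bracket of `P` and `Q`, regarded as forms of weights `k` and `l`. -/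
def rankinCohen (D : Derivation R A A) (k l : ℕ) (P Q : A) : A :=
  k * P * D Q - l * D P * Q

/-- The Wronskian determinant `det (D^j gᵢ)` of a family of ring elements. -/
def wronskian (D : Derivation R A A) {r : ℕ} (g : Fin r → A) : A :=
  (Matrix.of fun i j : Fin r => D^[j] (g i)).det

/-- The squared speed of the plane curve `(x, y)`, with `D` as time derivative. -/
def speedSq (D : Derivation R A A) (x y : A) : A :=
  D x ^ 2 + D y ^ 2

/-- The numerator `x' y'' - x'' y'` of the curvature of the plane curve `(x, y)`. -/
def curvatureNum (D : Derivation R A A) (x y : A) : A :=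
  rankinCohen D 1 1 (D x) (D y)

/-- Twice the numerator of the derivative of the curvature `curvatureNum / speedSq ^ (3 / 2)` of
the plane curve `(x, y)`. -/
def vertexNum (D : Derivation R A A) (x y : A) : A :=
  rankinCohen D 2 3 (speedSq D x y) (curvatureNum D x y)

theorem rankinCohen_pow_mul (D : Derivation R A A) (k l : ℕ) (u P Q : A) :
    rankinCohen D k l (u ^ k * P) (u ^ l * Q) = u ^ (k + l) * rankinCohen D k l P Q := by
  cases k <;> cases l <;>
    simp only [rankinCohen, Derivation.leibniz, Derivation.leibniz_pow, smul_eq_mul, nsmul_eq_mul,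
      Nat.add_sub_cancel, Nat.cast_zero] <;> ring

theorem curvatureNum_eq_wronskian (D : Derivation R A A) (x y : A) :
    curvatureNum D x y = wronskian D ![D x, D y] := by
  simp [curvatureNum, rankinCohen, wronskian, Matrix.det_fin_two]

theorem vertexNum_eq_neg_wronskian (D : Derivation R A A) (x y : A) {b c : A} (hb : D b = 0)
    (hc : D c = 0) :
    vertexNum D x y =
      -wronskian D ![D x, D y, D (x ^ 2 + y ^ 2 + 2 * b * x + 2 * c * y)] := by
  have h2 : D 2 = 0 := D.map_natCast 2
  simp only [vertexNum, curvatureNum, speedSq, rankinCohen, wronskian, Matrix.det_fin_three]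
  simp only [pow_two, map_sub, map_add, Derivation.leibniz, hb, hc, h2, smul_eq_mul,
    Matrix.of_apply, Matrix.cons_val, Fin.coe_ofNat_eq_mod, Nat.zero_mod, Nat.one_mod, Nat.mod_succ,
    Function.iterate_succ_apply, Function.iterate_zero_apply, Nat.cast_ofNat, Nat.cast_one,
    one_mul, mul_zero, add_zero]
  ring

section Intertwining

variable {φ : A →ₐ[R] B} {H : Derivation R A A} {D : Derivation R B B} {u v : B}

theorem map_rankinCohen (h : ∀ g, u * φ (H g) = v * D (φ g)) {k l : ℕ} {P Q : A} {P' Q' : B}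
    (hP : u ^ k * φ P = v ^ k * P') (hQ : u ^ l * φ Q = v ^ l * Q') :
    u ^ (k + l + 1) * φ (rankinCohen H k l P Q) =
      v ^ (k + l + 1) * rankinCohen D k l P' Q' := by
  have pull_back : u * φ (rankinCohen H k l P Q) = v * rankinCohen D k l (φ P) (φ Q) := by
    simp only [rankinCohen, map_sub, map_mul, map_natCast]
    linear_combination k * φ P * h Q - l * φ Q * h P
  calc u ^ (k + l + 1) * φ (rankinCohen H k l P Q)
      = v * (u ^ (k + l) * rankinCohen D k l (φ P) (φ Q)) := by
        linear_combination u ^ (k + l) * pull_back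
    _ = v * (v ^ (k + l) * rankinCohen D k l P' Q') := by
        rw [← rankinCohen_pow_mul, hP, hQ, rankinCohen_pow_mul]
    _ = v ^ (k + l + 1) * rankinCohen D k l P' Q' := by ring

theorem map_curvatureNum (h : ∀ g, u * φ (H g) = v * D (φ g)) (x y : A) :
    u ^ 3 * φ (curvatureNum H x y) = v ^ 3 * curvatureNum D (φ x) (φ y) :=
  map_rankinCohen (k := 1) (l := 1) h (by simpa using h x) (by simpa using h y)

theorem map_speedSq (h : ∀ g, u * φ (H g) = v * D (φ g)) (x y : A) :
    u ^ 2 * φ (speedSq H x y) = v ^ 2 * speedSq D (φ x) (φ y) := by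
  simp only [speedSq, map_add, map_pow, mul_add, ← mul_pow, h]

theorem map_vertexNum (h : ∀ g, u * φ (H g) = v * D (φ g)) (x y : A) :
    u ^ 6 * φ (vertexNum H x y) = v ^ 6 * vertexNum D (φ x) (φ y) :=
  map_rankinCohen h (map_speedSq h x y) (map_curvatureNum h x y)

end Intertwining

end Brackets

section PartialDerivatives

theorem pderiv_comm {R σ : Type*} [CommRing R] (i j : σ) (p : MvPolynomial σ R) :
    pderiv i (pderiv j p) = pderiv j (pderiv i p) := by
  classical
  have bracket_eq_zero : ⁅pderiv (R := R) i, pderiv j⁆ = 0 :=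
    derivation_ext fun k => by
      rw [Derivation.commutator_apply, pderiv_X, pderiv_X]
      simp [Pi.single_apply, apply_ite]
  exact sub_eq_zero.mp (DFunLike.congr_fun bracket_eq_zero p)

theorem derivation_aeval {R σ A : Type*} [CommSemiring R] [Fintype σ] [CommRing A] [Algebra R A]
    (D : Derivation R A A) (v : σ → A) (p : MvPolynomial σ R) :
    D (aeval v p) = ∑ i, aeval v (pderiv i p) * D (v i) := by
  classical
  induction p using MvPolynomial.induction_on with
  | C a => simp [algHom_C]
  | add p q hp hq => simp only [map_add, hp, hq, add_mul, Finset.sum_add_distrib]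
  | mul_X p j hp =>
    simp only [map_mul, aeval_X, Derivation.leibniz, hp, smul_eq_mul, map_add, pderiv_X,
      add_mul, Finset.sum_add_distrib, Finset.mul_sum]
    congr 1
    · simp [Pi.single_apply, apply_ite]
    · exact Finset.sum_congr rfl fun i _ => by ring

/-- The Hamiltonian vector field `f_y ∂/∂x - f_x ∂/∂y`, which is tangent to the curve `f = 0`. -/
noncomputable def hamiltonian (f : MvPolynomial (Fin 2) ℂ) :
    Derivation ℂ (MvPolynomial (Fin 2) ℂ) (MvPolynomial (Fin 2) ℂ) :=
  dy f • pderiv 0 - dx f • pderiv 1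

theorem hamiltonian_apply (f g : MvPolynomial (Fin 2) ℂ) :
    hamiltonian f g = dy f * dx g - dx f * dy g :=
  rfl

theorem hamiltonian_X_zero (f : MvPolynomial (Fin 2) ℂ) : hamiltonian f (X 0) = dy f := by
  simp [hamiltonian_apply, dx, dy]

theorem hamiltonian_X_one (f : MvPolynomial (Fin 2) ℂ) : hamiltonian f (X 1) = -dx f := by
  simp [hamiltonian_apply, dx, dy]

theorem curvatureNum_hamiltonian (f : MvPolynomial (Fin 2) ℂ) :
    curvatureNum (hamiltonian f) (X 0) (X 1) = -infl f := by
  rw [curvatureNum, rankinCohen, hamiltonian_X_zero, hamiltonian_X_one]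
  simp only [hamiltonian_apply, infl, dx, dy, map_neg, pderiv_comm (R := ℂ) (0 : Fin 2) 1]
  ring

theorem vertexNum_hamiltonian (f : MvPolynomial (Fin 2) ℂ) :
    vertexNum (hamiltonian f) (X 0) (X 1) = 2 * vert f := by
  have h2 (i : Fin 2) : pderiv i (2 : MvPolynomial (Fin 2) ℂ) = 0 := (pderiv i).map_natCast 2
  rw [vertexNum, curvatureNum_hamiltonian, speedSq, rankinCohen, hamiltonian_X_zero,
    hamiltonian_X_one]
  simp only [hamiltonian_apply, vert, infl, dx, dy, map_add, map_sub, map_neg, pderiv_mul,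
    pderiv_pow, pderiv_comm (R := ℂ) (0 : Fin 2) 1, h2]
  push_cast
  ring

section AlongCurve

variable {A : Type*} [CommRing A] [Algebra ℂ A] (D : Derivation ℂ A A) {x y : A}
  {f : MvPolynomial (Fin 2) ℂ}

theorem derivation_aeval_pair (x y : A) (g : MvPolynomial (Fin 2) ℂ) :
    D (aeval ![x, y] g) = aeval ![x, y] (dx g) * D x + aeval ![x, y] (dy g) * D y := by
  simp [derivation_aeval, dx, dy]

theorem mul_aeval_hamiltonian (hf : aeval ![x, y] f = 0) (g : MvPolynomial (Fin 2) ℂ) :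
    D x * aeval ![x, y] (hamiltonian f g) = aeval ![x, y] (dy f) * D (aeval ![x, y] g) := by
  have tangency : aeval ![x, y] (dx f) * D x + aeval ![x, y] (dy f) * D y = 0 := by
    rw [← derivation_aeval_pair, hf, map_zero]
  rw [derivation_aeval_pair, hamiltonian_apply, map_sub, map_mul, map_mul]
  linear_combination -aeval ![x, y] (dy g) * tangency

theorem aeval_infl_eq_curvatureNum (hf : aeval ![x, y] f = 0) :
    D x ^ 3 * aeval ![x, y] (infl f) = -(aeval ![x, y] (dy f) ^ 3 * curvatureNum D x y) := by
  have h := map_curvatureNum (mul_aeval_hamiltonian D hf) (X 0) (X 1)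
  simp only [curvatureNum_hamiltonian, map_neg, aeval_X, Matrix.cons_val] at h
  linear_combination -h

theorem aeval_vert_eq_vertexNum (hf : aeval ![x, y] f = 0) :
    D x ^ 6 * (2 * aeval ![x, y] (vert f)) = aeval ![x, y] (dy f) ^ 6 * vertexNum D x y := by
  simpa [vertexNum_hamiltonian] using map_vertexNum (mul_aeval_hamiltonian D hf) (X 0) (X 1)

end AlongCurve

end PartialDerivatives

section EulerDerivation

open scoped PowerSeries

open PowerSeries (coeff constantCoeff)

/-- The Euler derivation `T d/dT` of `K⟦T⟧`, chosen over `d/dT` because it preserves orders. -/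
noncomputable def euler (K : Type*) [CommRing K] : Derivation K K⟦X⟧ K⟦X⟧ :=
  (PowerSeries.X : K⟦X⟧) • PowerSeries.derivative K

/-- The equation of the circle `x² + y² + 2bx + 2cy = 0` evaluated along the branch `(x, y)`. -/
noncomputable def circleAlong {K : Type*} [CommRing K] (x y : K⟦X⟧) (b c : K) : K⟦X⟧ :=
  x ^ 2 + y ^ 2 + 2 * PowerSeries.C b * x + 2 * PowerSeries.C c * y

/-- The maximal order of contact of the branch `(x, y)` with circles through the origin. -/
noncomputable def contactOrder {K : Type*} [CommRing K] (x y : K⟦X⟧) : ℕ∞ :=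
  ⨆ p : K × K, (circleAlong x y p.1 p.2).order

section CommRing

variable {K : Type*} [CommRing K]

theorem coeff_euler (p : K⟦X⟧) (k : ℕ) :
    coeff k (euler K p) = k * coeff k p := by
  change coeff k (PowerSeries.X * PowerSeries.derivative K p) = _
  cases k with
  | zero => simp
  | succ k =>
    rw [PowerSeries.coeff_succ_X_mul, PowerSeries.coeff_derivative]
    push_cast
    ring

theorem euler_C (a : K) : euler K (PowerSeries.C a) = 0 :=
  (euler K).map_algebraMap a

theorem coeff_iterate_euler (p : K⟦X⟧) (j k : ℕ) :
    coeff k ((euler K)^[j] p) = k ^ j * coeff k p := by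
  induction j with
  | zero => simp
  | succ j ih => rw [Function.iterate_succ_apply', coeff_euler, ih, pow_succ']; ring

theorem iterate_euler_X_pow_mul (k j : ℕ) (p : K⟦X⟧) :
    ∃ q : K⟦X⟧, (euler K)^[j] (PowerSeries.X ^ k * p) = PowerSeries.X ^ k * q ∧
      constantCoeff q = k ^ j * constantCoeff p := by
  obtain ⟨q, hq⟩ : PowerSeries.X ^ k ∣ (euler K)^[j] (PowerSeries.X ^ k * p) := by
    rw [PowerSeries.X_pow_dvd_iff]
    intro i hi
    rw [coeff_iterate_euler, PowerSeries.X_pow_dvd_iff.mp (dvd_mul_right _ p) i hi, mul_zero]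
  refine ⟨q, hq, ?_⟩
  have coeff_X_pow_mul_self (s : K⟦X⟧) : coeff k (PowerSeries.X ^ k * s) = constantCoeff s := by
    simpa using PowerSeries.coeff_X_pow_mul s k 0
  rw [← coeff_X_pow_mul_self, ← hq, coeff_iterate_euler, coeff_X_pow_mul_self]

theorem wronskian_euler_X_pow_mul {r : ℕ} (k : Fin r → ℕ) (p : Fin r → K⟦X⟧) :
    ∃ w : K⟦X⟧, wronskian (euler K) (fun i => PowerSeries.X ^ k i * p i) =
        PowerSeries.X ^ (∑ i, k i) * w ∧
      constantCoeff w =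
        (∏ i, constantCoeff (p i)) * (Matrix.vandermonde fun i => (k i : K)).det := by
  choose q hq q_const using fun i (j : Fin r) => iterate_euler_X_pow_mul (k i) j (p i)
  refine ⟨(Matrix.of q).det, ?_, ?_⟩
  · simp only [wronskian, hq]
    rw [← Finset.prod_pow_eq_pow_sum]
    exact Matrix.det_mul_column _ (Matrix.of q)
  · rw [RingHom.map_det, ← Matrix.det_mul_column]
    congr 1
    ext i j
    simp [q_const, Matrix.vandermonde, mul_comm]

end CommRing

section CharZero

variable {K : Type*} [CommRing K] [IsDomain K] [CharZero K]

theorem order_euler {p : K⟦X⟧} (hp : 0 < p.order) : (euler K p).order = p.order := by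
  refine le_antisymm (PowerSeries.le_order _ _ fun k hk => ?_)
    (PowerSeries.le_order _ _ fun k hk => ?_)
  · rcases Nat.eq_zero_or_pos k with rfl | hk_pos
    · exact PowerSeries.coeff_of_lt_order 0 hp
    · have := PowerSeries.coeff_of_lt_order k hk
      rw [coeff_euler] at this
      exact (mul_eq_zero.mp this).resolve_left (by exact_mod_cast hk_pos.ne')
  · rw [coeff_euler, PowerSeries.coeff_of_lt_order k hk, mul_zero]

theorem order_wronskian_euler {r : ℕ} {g : Fin r → K⟦X⟧}
    (hg : Function.Injective fun i => (g i).order) :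
    (wronskian (euler K) g).order = ∑ i, (g i).order := by
  by_cases hzero : ∃ i, g i = 0
  · obtain ⟨i, hi⟩ := hzero
    have order_sum : ∑ i, (g i).order = ⊤ :=
      WithTop.sum_eq_top.mpr ⟨i, Finset.mem_univ i, PowerSeries.order_eq_top.mpr hi⟩
    rw [order_sum, PowerSeries.order_eq_top]
    refine Matrix.det_eq_zero_of_row_eq_zero i fun j => ?_
    simp [hi, iterate_map_zero]
  push Not at hzero
  obtain ⟨w, hw, w_const⟩ := wronskian_euler_X_pow_mul (fun i => (g i).order.toNat)
    fun i => (g i).divXPowOrder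
  simp only [PowerSeries.X_pow_order_mul_divXPowOrder,
    PowerSeries.constantCoeff_divXPowOrder] at hw w_const
  have w_const_ne_zero : constantCoeff w ≠ 0 := by
    rw [w_const]
    refine mul_ne_zero (Finset.prod_ne_zero_iff.mpr fun i _ => PowerSeries.coeff_order (hzero i))
      (Matrix.det_vandermonde_ne_zero_iff.mpr fun i j hij => hg ?_)
    exact (PowerSeries.coe_toNat_order (hzero i)).symm.trans
      ((congrArg _ (Nat.cast_injective hij)).trans (PowerSeries.coe_toNat_order (hzero j)))
  have w_order : w.order = 0 :=
    of_not_not (PowerSeries.order_ne_zero_iff_constCoeff_eq_zero.not.mpr w_const_ne_zero)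
  rw [hw, PowerSeries.order_mul, w_order, add_zero, PowerSeries.order_X_pow, Nat.cast_sum]
  exact Finset.sum_congr rfl fun i _ => PowerSeries.coe_toNat_order (hzero i)

theorem order_curvatureNum_euler {x y : K⟦X⟧} (hx : 0 < x.order) (hxy : x.order < y.order) :
    (curvatureNum (euler K) x y).order = x.order + y.order := by
  rw [curvatureNum_eq_wronskian, order_wronskian_euler]
  · simp [Fin.sum_univ_two, order_euler, hx, hx.trans hxy]
  · intro i j
    fin_cases i <;> fin_cases j <;>
      simp [order_euler, hx, hx.trans hxy, hxy.ne, hxy.ne']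

theorem injective_vec_three {α : Type*} {a b c : α} (hab : a ≠ b) (hac : a ≠ c) (hbc : b ≠ c) :
    Function.Injective ![a, b, c] := by
  intro i j
  fin_cases i <;> fin_cases j <;> simp [hab, hac, hbc, hab.symm, hac.symm, hbc.symm]

theorem order_vertexNum_euler {x y : K⟦X⟧} {b c : K} (hx : 0 < x.order) (hxy : x.order < y.order)
    (hpos : 0 < (circleAlong x y b c).order)
    (hcx : (circleAlong x y b c).order ≠ x.order) (hcy : (circleAlong x y b c).order ≠ y.order) :
    (vertexNum (euler K) x y).order = x.order + y.order + (circleAlong x y b c).order := by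
  rw [vertexNum_eq_neg_wronskian _ x y (euler_C b) (euler_C c), PowerSeries.order_neg,
    ← circleAlong, order_wronskian_euler]
  · rw [Fin.sum_univ_three, ← order_euler hx, ← order_euler (hx.trans hxy), ← order_euler hpos]
    rfl
  · have orders_eq : (fun i => (![euler K x, euler K y, euler K (circleAlong x y b c)] i).order) =
        ![x.order, y.order, (circleAlong x y b c).order] := by
      ext i
      fin_cases i
      exacts [order_euler hx, order_euler (hx.trans hxy), order_euler hpos]
    rw [orders_eq]
    exact injective_vec_three hxy.ne hcx.symm hcy.symm

end CharZero

end EulerDerivation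

section Contact

open scoped PowerSeries

section CommRing

variable {K : Type*} [CommRing K]

theorem rescale_C (a b : K) :
    PowerSeries.rescale a (PowerSeries.C b) = PowerSeries.C b := by
  ext i
  cases i <;> simp [PowerSeries.coeff_C]

theorem circleAlong_eq_add (x y : K⟦X⟧) (b c b' c' : K) :
    circleAlong x y b' c' = circleAlong x y b c +
      (PowerSeries.C (2 * (b' - b)) * x + PowerSeries.C (2 * (c' - c)) * y) := by
  simp only [circleAlong, map_mul, map_sub, map_ofNat]
  ring

theorem circleAlong_eq_sq_add_sq_add (x y : K⟦X⟧) (b c : K) :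
    circleAlong x y b c =
      x ^ 2 + y ^ 2 + (PowerSeries.C (2 * b) * x + PowerSeries.C (2 * c) * y) := by
  simp only [circleAlong, map_mul, map_ofNat]
  ring

end CommRing

section IsDomain

variable {K : Type*} [CommRing K] [IsDomain K]

theorem order_C_mul {a : K} (ha : a ≠ 0) (p : K⟦X⟧) : (PowerSeries.C a * p).order = p.order := by
  have C_order : (PowerSeries.C a).order = 0 :=
    of_not_not (PowerSeries.order_ne_zero_iff_constCoeff_eq_zero.not.mpr (by simpa using ha))
  rw [PowerSeries.order_mul, C_order, zero_add]

theorem order_C_mul_add_C_mul {x y : K⟦X⟧} (hxy : x.order ≠ y.order) (b c : K) :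
    (PowerSeries.C b * x + PowerSeries.C c * y).order = x.order ∨
      (PowerSeries.C b * x + PowerSeries.C c * y).order = y.order ∨
      PowerSeries.C b * x + PowerSeries.C c * y = 0 := by
  by_cases hb : b = 0 <;> by_cases hc : c = 0
  · simp [hb, hc]
  · simp [hb, order_C_mul hc]
  · simp [hc, order_C_mul hb]
  · rw [PowerSeries.order_add_of_order_ne _ _ (by rwa [order_C_mul hb, order_C_mul hc]),
      order_C_mul hb, order_C_mul hc]
    rcases le_total x.order y.order with h | h <;> simp [h]

theorem contactOrder_eq_of_order_ne {x y : K⟦X⟧} {b c : K} (hxy : x.order ≠ y.order)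
    (hcx : (circleAlong x y b c).order ≠ x.order) (hcy : (circleAlong x y b c).order ≠ y.order) :
    contactOrder x y = (circleAlong x y b c).order := by
  refine le_antisymm (iSup_le fun p => ?_) (le_iSup_of_le (b, c) le_rfl)
  rw [circleAlong_eq_add x y b c]
  rcases order_C_mul_add_C_mul hxy (2 * (p.1 - b)) (2 * (p.2 - c)) with h | h | h
  · rw [PowerSeries.order_add_of_order_ne _ _ (by rwa [h])]
    exact inf_le_left
  · rw [PowerSeries.order_add_of_order_ne _ _ (by rwa [h])]
    exact inf_le_left
  · rw [h, add_zero]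

theorem order_sq_add_sq {x y : K⟦X⟧} (hxy : x.order < y.order) :
    (x ^ 2 + y ^ 2).order = 2 * x.order := by
  have sq_lt : (x ^ 2).order < (y ^ 2).order := by
    simp only [pow_two, PowerSeries.order_mul]
    exact ENat.add_lt_add hxy hxy
  rw [PowerSeries.order_add_of_order_ne _ _ sq_lt.ne, inf_eq_left.mpr sq_lt.le,
    PowerSeries.order_pow, nsmul_eq_mul, Nat.cast_ofNat]

theorem coeff_eq_zero_of_rescale_eq {m : ℕ} {ζ : K} (hζ : IsPrimitiveRoot ζ m) {y : K⟦X⟧}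
    (hy : PowerSeries.rescale ζ y = y) {i : ℕ} (hi : ¬m ∣ i) : PowerSeries.coeff i y = 0 := by
  have coeff_fixed := congrArg (PowerSeries.coeff i) hy
  rw [PowerSeries.coeff_rescale] at coeff_fixed
  by_contra hne
  exact hi (hζ.dvd_of_pow_eq_one i (mul_eq_right₀ hne |>.mp coeff_fixed))

theorem circleAlong_zero_right_ne_zero {m : ℕ} (hm : m ≠ 0) {y : K⟦X⟧} (hy : m < y.order) (b : K) :
    circleAlong (PowerSeries.X ^ m) y b 0 ≠ 0 := by
  have y_sq_coeff : PowerSeries.coeff (2 * m) (y ^ 2) = 0 := by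
    refine PowerSeries.coeff_of_lt_order _ ?_
    rw [pow_two, PowerSeries.order_mul, two_mul, Nat.cast_add]
    exact ENat.add_lt_add hy hy
  intro h
  have coeff_eq := congrArg (PowerSeries.coeff (2 * m)) h
  rw [circleAlong_eq_sq_add_sq_add, ← pow_mul, mul_comm m 2] at coeff_eq
  simp only [map_add, PowerSeries.coeff_C_mul, PowerSeries.coeff_X_pow, y_sq_coeff] at coeff_eq
  simp [hm] at coeff_eq

variable [CharZero K]

theorem rescale_eq_of_circleAlong_eq_zero {x y : K⟦X⟧} {a b c : K} (hy : 0 < y.order) (hc : c ≠ 0)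
    (hx : PowerSeries.rescale a x = x) (h : circleAlong x y b c = 0) :
    PowerSeries.rescale a y = y := by
  have rescaled := congrArg (PowerSeries.rescale a) h
  simp only [circleAlong, map_add, map_mul, map_pow, map_ofNat, rescale_C, hx,
    map_zero] at rescaled
  have factored : (PowerSeries.rescale a y - y) *
      (PowerSeries.rescale a y + y + 2 * PowerSeries.C c) = 0 := by
    rw [circleAlong] at h
    linear_combination rescaled - h
  refine sub_eq_zero.mp ((mul_eq_zero.mp factored).resolve_right fun h0 => ?_)
  have const_eq := congrArg (PowerSeries.coeff 0) h0
  rw [← map_ofNat PowerSeries.C 2, ← map_mul, map_add, map_add, PowerSeries.coeff_rescale,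
    PowerSeries.coeff_of_lt_order 0 hy] at const_eq
  simp [hc] at const_eq

theorem circleAlong_X_pow_ne_zero {m : ℕ} {ζ : K} (hζ : IsPrimitiveRoot ζ m) (hm : m ≠ 0)
    {y : K⟦X⟧} (hy : m < y.order) (hred : ∃ i, PowerSeries.coeff i y ≠ 0 ∧ ¬m ∣ i) (b c : K) :
    circleAlong (PowerSeries.X ^ m) y b c ≠ 0 := by
  intro h
  obtain ⟨i, coeff_ne, hi⟩ := hred
  have hc : c ≠ 0 := by
    rintro rfl
    exact circleAlong_zero_right_ne_zero hm hy b h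
  have X_pow_fixed : PowerSeries.rescale ζ (PowerSeries.X ^ m) = PowerSeries.X ^ m := by
    rw [map_pow, PowerSeries.rescale_X, mul_pow, ← map_pow, hζ.pow_eq_one, map_one, one_mul]
  exact coeff_ne (coeff_eq_zero_of_rescale_eq hζ
    (rescale_eq_of_circleAlong_eq_zero (pos_of_gt hy) hc X_pow_fixed h) hi)

end IsDomain

section Field

variable {K : Type*} [Field K]

theorem exists_lt_order_add_C_mul {p q : K⟦X⟧} (hpq : p.order = q.order) (hq : q ≠ 0) :
    ∃ a : K, q.order < (p + PowerSeries.C a * q).order := by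
  have hn := PowerSeries.coe_toNat_order hq
  have lead_ne := PowerSeries.coeff_order hq
  set n := q.order.toNat
  refine ⟨-PowerSeries.coeff n p / PowerSeries.coeff n q, ?_⟩
  rw [← hn, ← ENat.add_one_le_iff (ENat.natCast_ne_top n)]
  refine PowerSeries.nat_le_order _ (n + 1) fun i hi => ?_
  rw [map_add, PowerSeries.coeff_C_mul]
  rcases (Nat.lt_succ_iff.mp hi).lt_or_eq with hlt | rfl
  · have hlt' : (i : ℕ∞) < q.order := by rw [← hn]; exact_mod_cast hlt
    rw [PowerSeries.coeff_of_lt_order i hlt', PowerSeries.coeff_of_lt_order i (hpq ▸ hlt')]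
    ring
  · field_simp
    ring

variable [CharZero K]

theorem exists_circleAlong_order_ne {x y : K⟦X⟧} (hx : 0 < x.order) (hxy : x.order < y.order) :
    ∃ b c : K, x.order < (circleAlong x y b c).order ∧ (circleAlong x y b c).order ≠ y.order := by
  have lt_two_mul : x.order < 2 * x.order := by
    lift x.order to ℕ using hxy.ne_top with m
    norm_cast at *
    omega
  by_cases hy : 2 * x.order = y.order
  · have y_ne_zero : y ≠ 0 := by
      rw [ne_eq, ← PowerSeries.order_eq_top, ← hy]
      exact WithTop.mul_ne_top (ENat.ofNat_ne_top 2) hxy.ne_top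
    obtain ⟨a, ha⟩ := exists_lt_order_add_C_mul ((order_sq_add_sq hxy).trans hy) y_ne_zero
    have circle_eq : circleAlong x y 0 (a / 2) = x ^ 2 + y ^ 2 + PowerSeries.C a * y := by
      simp [circleAlong_eq_sq_add_sq_add, mul_div_cancel₀ a two_ne_zero]
    exact ⟨0, a / 2, circle_eq ▸ hxy.trans ha, circle_eq ▸ ha.ne'⟩
  · have circle_eq : circleAlong x y 0 0 = x ^ 2 + y ^ 2 := by simp [circleAlong]
    refine ⟨0, 0, ?_, ?_⟩ <;> rw [circle_eq, order_sq_add_sq hxy]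
    exacts [lt_two_mul, hy]

theorem order_vertexNum_euler_eq_contactOrder {x y : K⟦X⟧} (hx : 0 < x.order)
    (hxy : x.order < y.order) :
    (vertexNum (euler K) x y).order = x.order + y.order + contactOrder x y := by
  obtain ⟨b, c, hcx, hcy⟩ := exists_circleAlong_order_ne hx hxy
  rw [contactOrder_eq_of_order_ne hxy.ne hcx.ne' hcy,
    order_vertexNum_euler hx hxy (hx.trans hcx) hcx.ne' hcy]

theorem contactOrder_X_pow_ne_top {m : ℕ} {ζ : K} (hζ : IsPrimitiveRoot ζ m) (hm : m ≠ 0)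
    {y : K⟦X⟧} (hy : m < y.order) (hred : ∃ i, PowerSeries.coeff i y ≠ 0 ∧ ¬m ∣ i) :
    contactOrder (PowerSeries.X ^ m) y ≠ ⊤ := by
  have X_pow_order : (PowerSeries.X ^ m : K⟦X⟧).order = m := PowerSeries.order_X_pow m
  have order_pos : 0 < (PowerSeries.X ^ m : K⟦X⟧).order := by
    rw [X_pow_order]
    exact_mod_cast Nat.pos_of_ne_zero hm
  have order_lt : (PowerSeries.X ^ m : K⟦X⟧).order < y.order := X_pow_order ▸ hy
  obtain ⟨b, c, hcx, hcy⟩ := exists_circleAlong_order_ne order_pos order_lt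
  rw [contactOrder_eq_of_order_ne order_lt.ne hcx.ne' hcy, ne_eq, PowerSeries.order_eq_top]
  exact circleAlong_X_pow_ne_zero hζ hm hy hred b c

end Field

end Contact

section OrderFormulas

variable {x y : PowerSeries ℂ} {f : MvPolynomial (Fin 2) ℂ}

theorem order_aeval_infl (hx : 0 < x.order) (hxy : x.order < y.order) (hf : aeval ![x, y] f = 0) :
    3 * x.order + (aeval ![x, y] (infl f)).order =
      3 * (aeval ![x, y] (dy f)).order + (x.order + y.order) := by
  have h := congrArg PowerSeries.order (aeval_infl_eq_curvatureNum (euler ℂ) hf)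
  simpa only [PowerSeries.order_neg, PowerSeries.order_mul, PowerSeries.order_pow, order_euler hx,
    order_curvatureNum_euler hx hxy, nsmul_eq_mul, Nat.cast_ofNat] using h

theorem order_aeval_vert (hx : 0 < x.order) (hxy : x.order < y.order) (hf : aeval ![x, y] f = 0) :
    6 * x.order + (aeval ![x, y] (vert f)).order =
      6 * (aeval ![x, y] (dy f)).order + (x.order + y.order + contactOrder x y) := by
  have h := congrArg PowerSeries.order (aeval_vert_eq_vertexNum (euler ℂ) hf)
  have two_eq_C : (2 : PowerSeries ℂ) = PowerSeries.C 2 := (map_ofNat PowerSeries.C 2).symm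
  simpa only [two_eq_C, order_C_mul (two_ne_zero' ℂ), PowerSeries.order_mul, PowerSeries.order_pow,
    order_euler hx, order_vertexNum_euler_eq_contactOrder hx hxy, nsmul_eq_mul,
    Nat.cast_ofNat] using h

theorem order_aeval_vert_add_eq (hx : 0 < x.order) (hxy : x.order < y.order)
    (hf : aeval ![x, y] f = 0) :
    (aeval ![x, y] (vert f)).order + 3 * x.order =
      (aeval ![x, y] (infl f)).order + 3 * (aeval ![x, y] (dy f)).order + contactOrder x y := by
  have three_mul_ne_top : 3 * x.order ≠ ⊤ := WithTop.mul_ne_top (ENat.ofNat_ne_top 3) hxy.ne_top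
  apply ENat.add_left_injective_of_ne_top three_mul_ne_top
  change _ + _ = _ + _
  calc (aeval ![x, y] (vert f)).order + 3 * x.order + 3 * x.order
      = 6 * x.order + (aeval ![x, y] (vert f)).order := by ring
    _ = 3 * (aeval ![x, y] (dy f)).order + (x.order + y.order) +
          3 * (aeval ![x, y] (dy f)).order + contactOrder x y := by
        rw [order_aeval_vert hx hxy hf]
        ring
    _ = (aeval ![x, y] (infl f)).order + 3 * (aeval ![x, y] (dy f)).order + contactOrder x y +
          3 * x.order := by
        rw [← order_aeval_infl hx hxy hf]
        ring

theorem order_aeval_infl_ne_top (hx : 0 < x.order) (hxy : x.order < y.order) (hy : y.order ≠ ⊤)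
    (hf : aeval ![x, y] f = 0) (hfy : aeval ![x, y] (dy f) ≠ 0) :
    (aeval ![x, y] (infl f)).order ≠ ⊤ := by
  have dy_ne_top := PowerSeries.order_eq_top.not.mpr hfy
  have sum_ne_top : 3 * (aeval ![x, y] (dy f)).order + (x.order + y.order) ≠ ⊤ :=
    WithTop.add_ne_top.mpr ⟨WithTop.mul_ne_top (ENat.ofNat_ne_top 3) dy_ne_top,
      WithTop.add_ne_top.mpr ⟨hxy.ne_top, hy⟩⟩
  rw [← order_aeval_infl hx hxy hf] at sum_ne_top
  exact (WithTop.add_ne_top.mp sum_ne_top).2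

theorem order_aeval_vert_ne_top (hx : 0 < x.order) (hxy : x.order < y.order) (hy : y.order ≠ ⊤)
    (hc : contactOrder x y ≠ ⊤) (hf : aeval ![x, y] f = 0) (hfy : aeval ![x, y] (dy f) ≠ 0) :
    (aeval ![x, y] (vert f)).order ≠ ⊤ := by
  have dy_ne_top := PowerSeries.order_eq_top.not.mpr hfy
  have sum_ne_top : 6 * (aeval ![x, y] (dy f)).order +
      (x.order + y.order + contactOrder x y) ≠ ⊤ :=
    WithTop.add_ne_top.mpr ⟨WithTop.mul_ne_top (ENat.ofNat_ne_top 6) dy_ne_top,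
      WithTop.add_ne_top.mpr ⟨WithTop.add_ne_top.mpr ⟨hxy.ne_top, hy⟩, hc⟩⟩
  rw [← order_aeval_vert hx hxy hf] at sum_ne_top
  exact (WithTop.add_ne_top.mp sum_ne_top).2

end OrderFormulas

/-- **Theorem 3.9 (parametrised form).** Let `γ(t) = (t^m, y(t))`, `2 ≤ m < n = ord y`,
with `y` reduced with respect to `m`, parametrise a branch of the curve `f = 0` with
`f_y ∘ γ ≠ 0`. Then the maximal order of contact `λ` of `γ` with complex circles
through the origin is finite, `ord(v_f ∘ γ)` and `ord(i_f ∘ γ)` are finite, and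
`ord(v_f ∘ γ) + 3(m − 1) + 3 = ord(i_f ∘ γ) + 3·ord(f_y ∘ γ) + λ`
(which renders `V_f = I_f + 3μ(f) + λ(f) − 3`). -/
theorem vertex_eq_inflection_milnor_contact
    (f : MvPolynomial (Fin 2) ℂ) (m n : ℕ) (hm : 2 ≤ m) (hmn : m < n)
    (y : PowerSeries ℂ) (hy : y.order = n)
    (hred : ∃ i, (PowerSeries.coeff i) y ≠ 0 ∧ ¬ m ∣ i)
    (hf : MvPolynomial.aeval ![(PowerSeries.X : PowerSeries ℂ) ^ m, y] f = 0)
    (hfy : MvPolynomial.aeval ![(PowerSeries.X : PowerSeries ℂ) ^ m, y] (dy f) ≠ 0) :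
    (MvPolynomial.aeval ![(PowerSeries.X : PowerSeries ℂ) ^ m, y] (vert f)).order ≠ ⊤ ∧
    (MvPolynomial.aeval ![(PowerSeries.X : PowerSeries ℂ) ^ m, y] (infl f)).order ≠ ⊤ ∧
    (⨆ p : ℂ × ℂ, ((PowerSeries.X : PowerSeries ℂ) ^ (2 * m) + y ^ 2 +
        2 * PowerSeries.C p.1 * (PowerSeries.X : PowerSeries ℂ) ^ m +
        2 * PowerSeries.C p.2 * y).order) ≠ ⊤ ∧
    (MvPolynomial.aeval ![(PowerSeries.X : PowerSeries ℂ) ^ m, y] (vert f)).order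
        + ((3 * (m - 1) : ℕ) : ℕ∞) + 3
      = (MvPolynomial.aeval ![(PowerSeries.X : PowerSeries ℂ) ^ m, y] (infl f)).order
          + 3 * (MvPolynomial.aeval ![(PowerSeries.X : PowerSeries ℂ) ^ m, y] (dy f)).order
          + ⨆ p : ℂ × ℂ, ((PowerSeries.X : PowerSeries ℂ) ^ (2 * m) + y ^ 2 +
              2 * PowerSeries.C p.1 * (PowerSeries.X : PowerSeries ℂ) ^ m +
              2 * PowerSeries.C p.2 * y).order := by
  have hm_ne : m ≠ 0 := by omega
  have X_pow_order : (PowerSeries.X ^ m : PowerSeries ℂ).order = m := PowerSeries.order_X_pow m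
  have order_pos : 0 < (PowerSeries.X ^ m : PowerSeries ℂ).order := by
    rw [X_pow_order]
    exact_mod_cast Nat.pos_of_ne_zero hm_ne
  have hmy : (m : ℕ∞) < y.order := by rw [hy]; exact_mod_cast hmn
  have order_lt : (PowerSeries.X ^ m : PowerSeries ℂ).order < y.order := X_pow_order ▸ hmy
  have hy_ne_top : y.order ≠ ⊤ := hy ▸ ENat.natCast_ne_top n
  have sup_eq : (⨆ p : ℂ × ℂ, ((PowerSeries.X : PowerSeries ℂ) ^ (2 * m) + y ^ 2 +
      2 * PowerSeries.C p.1 * (PowerSeries.X : PowerSeries ℂ) ^ m +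
      2 * PowerSeries.C p.2 * y).order) = contactOrder (PowerSeries.X ^ m) y := by
    simp only [contactOrder, circleAlong, ← pow_mul, mul_comm m 2]
  have contact_ne_top : contactOrder (PowerSeries.X ^ m) y ≠ ⊤ :=
    contactOrder_X_pow_ne_top (Complex.isPrimitiveRoot_exp m hm_ne) hm_ne hmy hred
  have shift : ((3 * (m - 1) : ℕ) : ℕ∞) + 3 = 3 * m := by
    norm_cast
    omega
  rw [sup_eq, add_assoc, shift, ← X_pow_order]
  exact ⟨order_aeval_vert_ne_top order_pos order_lt hy_ne_top contact_ne_top hf hfy,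
    order_aeval_infl_ne_top order_pos order_lt hy_ne_top hf hfy, contact_ne_top,
    order_aeval_vert_add_eq order_pos order_lt hf⟩
end

section
/- Let f, g ∈ R := MvPolynomial ℂ (Fin 2) and let w₁, w₂, d : ℕ satisfy: w₁ ≥ 1, w₂ ≥ 1, gcd(w₁, w₂) = 1, w₁ ≠ w₂, d > 0; g ≠ 0 and g is quasihomogeneous of weighted degree d, i.e. every exponent α in the support of g satisfies w₁·α(0) + w₂·α(1) = d; every exponent α in the support of f − g satisfies w₁·α(0) + w₂·α(1) > d; X does not divide g and Y does not divide g in R; and g is squarefree. Then the quotient A ⧸ Ideal.span {ι f, ι(i_f)} is a finite-dimensional ℂ-vector space and w₁ · w₂ · Module.finrank ℂ (A ⧸ Ideal.span {ι f, ι(i_f)}) = d · (3d − 2w₁ − 2w₂) (an equality of natural numbers; 3d ≥ 2w₁ + 2w₂ under the hypotheses). -/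
open MvPolynomial

/-!
Filter the power series ring by weighted order. If the initial forms `g`, `h` of `a`, `b`, of
weighted degrees `d`, `e`, are relatively prime, then multiplication by `a`, and by `b` modulo `a`,
is strictly compatible with the filtration, so the colengths of `⟨a, b⟩ + (weight ≥ n + d + e)` are
mixed second differences, with steps `d` and `e`, of the colengths of the filtration. For the pair
of variables `x`, `y` that colength is `1`, and since the order of taking differences and sums can
be exchanged, summing over a `w₀ × w₁` box yields `d e` for every `n`. Hence the colength is
independent of `n`, `⟨a, b⟩` contains all series of weight at least `d + e`, and its colength is
`d e / (w₀ w₁)`.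

For the inflection form, `x² y² i_f` is a polynomial expression in `x ∂/∂x` and `y ∂/∂y`, which
preserve weights; so `i_f` has initial form `i_g`, of degree `3d - 2w₀ - 2w₁`, once `i_g ≠ 0`.
Euler's identity gives `w₀² x² y² i_g ≡ w₁ (w₀ - w₁) (y g_y)³` modulo `g`. As neither `x` nor `y`
divides `g`, a common prime factor of `g` and `i_g` divides both `g_x` and `g_y`, which is
impossible for a squarefree `g`.
-/

section WeightFiltration

variable {σ R : Type*} [CommRing R] {w : σ → ℕ} {n m : ℕ}

variable (R) in
/-- The ideal of power series all of whose terms have weight at least `n`, where the variable `i`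
has weight `w i`; these ideals form the decreasing filtration by weighted order. -/
def weightIdeal (w : σ → ℕ) (n : ℕ) : Ideal (MvPowerSeries σ R) where
  carrier := {a | n ≤ a.weightedOrder w}
  add_mem' ha hb := (le_min ha hb).trans (MvPowerSeries.min_weightedOrder_le_add w)
  zero_mem' := by simp
  smul_mem' c _ ha := ha.trans (le_add_self.trans (MvPowerSeries.le_weightedOrder_mul w))

theorem mem_weightIdeal {a : MvPowerSeries σ R} :
    a ∈ weightIdeal R w n ↔ n ≤ a.weightedOrder w :=
  Iff.rfl

theorem mem_weightIdeal_iff_coeff {a : MvPowerSeries σ R} :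
    a ∈ weightIdeal R w n ↔ ∀ s, Finsupp.weight w s < n → MvPowerSeries.coeff s a = 0 :=
  ⟨fun ha _ hs => MvPowerSeries.coeff_eq_zero_of_lt_weightedOrder w
    ((Nat.cast_lt.2 hs).trans_le ha), MvPowerSeries.nat_le_weightedOrder w⟩

theorem weightIdeal_antitone : Antitone (weightIdeal R w) :=
  fun _ _ h _ ha => (Nat.cast_le (α := ℕ∞).2 h).trans ha

theorem weightIdeal_zero : weightIdeal R w 0 = ⊤ :=
  eq_top_iff.2 fun _ _ => mem_weightIdeal.2 (by simp)

theorem mul_mem_weightIdeal {a b : MvPowerSeries σ R} (ha : a ∈ weightIdeal R w m)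
    (hb : b ∈ weightIdeal R w n) : a * b ∈ weightIdeal R w (m + n) := by
  rw [mem_weightIdeal, Nat.cast_add]
  exact (add_le_add ha hb).trans (MvPowerSeries.le_weightedOrder_mul w)

theorem coe_mem_weightIdeal {p : MvPolynomial σ R} (hp : p.IsWeightedHomogeneous w n) :
    (p : MvPowerSeries σ R) ∈ weightIdeal R w n :=
  mem_weightIdeal_iff_coeff.2 fun s hs => by
    rw [coeff_coe, hp.coeff_eq_zero s hs.ne]

theorem eq_zero_of_coe_mem_weightIdeal_succ {p : MvPolynomial σ R}
    (hp : p.IsWeightedHomogeneous w n)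
    (h : (p : MvPowerSeries σ R) ∈ weightIdeal R w (n + 1)) : p = 0 := by
  by_contra hp0
  obtain ⟨s, hs⟩ := exists_coeff_ne_zero hp0
  refine hs ?_
  rw [← coeff_coe, mem_weightIdeal_iff_coeff.1 h s (by rw [hp hs]; exact n.lt_succ_self)]

theorem coe_mvPolynomial_sub (p q : MvPolynomial σ R) :
    ((p - q : MvPolynomial σ R) : MvPowerSeries σ R) = p - q :=
  map_sub coeToMvPowerSeries.ringHom p q

theorem coeff_X_mul_pderiv (i : σ) (a : MvPowerSeries σ R) (s : σ →₀ ℕ) :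
    MvPowerSeries.coeff s (MvPowerSeries.X i * MvPowerSeries.pderiv R i a) =
      s i * MvPowerSeries.coeff s a := by
  classical
  rw [MvPowerSeries.X, MvPowerSeries.coeff_monomial_mul, one_mul]
  split_ifs with hs
  · rw [MvPowerSeries.coeff_pderiv, tsub_add_cancel_of_le hs]
    have hsi : 1 ≤ s i := Finsupp.single_le_iff.1 hs
    rw [mul_comm, Finsupp.tsub_apply, Finsupp.single_eq_same, Nat.cast_sub hsi, Nat.cast_one,
      sub_add_cancel]
  · rw [Finsupp.single_le_iff] at hs
    simp [Nat.eq_zero_of_not_pos hs]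

theorem X_mul_pderiv_mem_weightIdeal (i : σ) {a : MvPowerSeries σ R}
    (ha : a ∈ weightIdeal R w n) :
    MvPowerSeries.X i * MvPowerSeries.pderiv R i a ∈ weightIdeal R w n :=
  mem_weightIdeal_iff_coeff.2 fun s hs => by
    rw [coeff_X_mul_pderiv, mem_weightIdeal_iff_coeff.1 ha s hs, mul_zero]

theorem isWeightedHomogeneous_X_mul_pderiv (i : σ) {p : MvPolynomial σ R}
    (hp : p.IsWeightedHomogeneous w n) : (X i * pderiv i p).IsWeightedHomogeneous w n := by
  intro s hs
  refine hp fun h => hs ?_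
  rw [← coeff_coe, coe_mul, coe_X, ← MvPowerSeries.pderiv_coe, coeff_X_mul_pderiv, coeff_coe, h,
    mul_zero]

end WeightFiltration

section InitialForm

variable {σ R : Type*} [CommRing R] {w : σ → ℕ} {d e n : ℕ}
  {a b : MvPowerSeries σ R} {p q : MvPolynomial σ R}

/-- `p` is the initial form, in weighted degree `d`, of the power series `a`: it is
quasihomogeneous of degree `d` and all terms of `a - p` have weight greater than `d`. The form
`p = 0` is allowed and says that all terms of `a` have weight greater than `d`. -/
structure IsInitialForm (w : σ → ℕ) (d : ℕ) (a : MvPowerSeries σ R) (p : MvPolynomial σ R) :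
    Prop where
  isWeightedHomogeneous : p.IsWeightedHomogeneous w d
  sub_coe_mem : a - p ∈ weightIdeal R w (d + 1)

namespace IsInitialForm

theorem of_coe (hp : p.IsWeightedHomogeneous w d) : IsInitialForm w d (p : MvPowerSeries σ R) p :=
  ⟨hp, by rw [sub_self]; exact zero_mem _⟩

theorem mem (ha : IsInitialForm w d a p) : a ∈ weightIdeal R w d := by
  rw [← sub_add_cancel a p]
  exact add_mem (weightIdeal_antitone d.le_succ ha.sub_coe_mem)
    (coe_mem_weightIdeal ha.isWeightedHomogeneous)

theorem add (ha : IsInitialForm w d a p) (hb : IsInitialForm w d b q) :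
    IsInitialForm w d (a + b) (p + q) :=
  ⟨ha.isWeightedHomogeneous.add hb.isWeightedHomogeneous, by
    rw [coe_add, add_sub_add_comm]; exact add_mem ha.sub_coe_mem hb.sub_coe_mem⟩

theorem sub (ha : IsInitialForm w d a p) (hb : IsInitialForm w d b q) :
    IsInitialForm w d (a - b) (p - q) :=
  ⟨ha.isWeightedHomogeneous.sub hb.isWeightedHomogeneous, by
    rw [coe_mvPolynomial_sub, sub_sub_sub_comm]; exact sub_mem ha.sub_coe_mem hb.sub_coe_mem⟩

theorem mul (ha : IsInitialForm w d a p) (hb : IsInitialForm w e b q) :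
    IsInitialForm w (d + e) (a * b) (p * q) := by
  refine ⟨ha.isWeightedHomogeneous.mul hb.isWeightedHomogeneous, ?_⟩
  have split : a * b - (p * q : MvPolynomial σ R) = a * (b - q) + (a - p) * q := by
    rw [coe_mul]; ring
  rw [split]
  refine add_mem ?_ ?_
  · rw [add_assoc]
    exact mul_mem_weightIdeal ha.mem hb.sub_coe_mem
  · rw [add_right_comm]
    exact mul_mem_weightIdeal ha.sub_coe_mem (coe_mem_weightIdeal hb.isWeightedHomogeneous)

theorem congr (ha : IsInitialForm w d a p) (hab : b - a ∈ weightIdeal R w (d + 1)) :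
    IsInitialForm w d b p :=
  ⟨ha.isWeightedHomogeneous, by
    rw [← sub_add_sub_cancel b a p]; exact add_mem hab ha.sub_coe_mem⟩

theorem unique (hp : IsInitialForm w d a p) (hq : IsInitialForm w d a q) : p = q := by
  refine sub_eq_zero.1 (eq_zero_of_coe_mem_weightIdeal_succ
    (hp.isWeightedHomogeneous.sub hq.isWeightedHomogeneous) ?_)
  rw [coe_mvPolynomial_sub, ← sub_sub_sub_cancel_left (q : MvPowerSeries σ R) p a]
  exact sub_mem hq.sub_coe_mem hp.sub_coe_mem

theorem X_mul_pderiv (i : σ) (ha : IsInitialForm w d a p) :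
    IsInitialForm w d (MvPowerSeries.X i * MvPowerSeries.pderiv R i a) (X i * pderiv i p) := by
  refine ⟨isWeightedHomogeneous_X_mul_pderiv i ha.isWeightedHomogeneous, ?_⟩
  rw [coe_mul, coe_X, ← MvPowerSeries.pderiv_coe, ← mul_sub, ← map_sub]
  exact X_mul_pderiv_mem_weightIdeal i ha.sub_coe_mem

theorem weightedOrder_eq (ha : IsInitialForm w d a p) (hp : p ≠ 0) : a.weightedOrder w = d := by
  refine le_antisymm ?_ ha.mem
  by_contra! h
  have hz : IsInitialForm w d a 0 :=
    ⟨isWeightedHomogeneous_zero R w d, by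
      rw [coe_zero, sub_zero]; exact Order.add_one_le_of_lt h⟩
  exact hp (ha.unique hz)

theorem exists_of_mem_weightIdeal [Finite σ] (hw : ∀ i, w i ≠ 0)
    (ha : a ∈ weightIdeal R w d) : ∃ p : MvPolynomial σ R, IsInitialForm w d a p := by
  classical
  let form : MvPolynomial σ R := ∑ t ∈ (Finsupp.finite_of_nat_weight_eq w hw d).toFinset,
    monomial t (MvPowerSeries.coeff t a)
  have coeff_form (s : σ →₀ ℕ) : coeff s form =
      if Finsupp.weight w s = d then MvPowerSeries.coeff s a else 0 := by
    simp [form, coeff_sum, coeff_monomial]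
  refine ⟨form, fun s hs => ?_, mem_weightIdeal_iff_coeff.2 fun s hs => ?_⟩
  · rw [coeff_form] at hs
    by_contra h
    exact hs (if_neg h)
  · rw [map_sub, coeff_coe, coeff_form]
    split_ifs with h
    · exact sub_self _
    · rw [sub_zero, mem_weightIdeal_iff_coeff.1 ha s (by lia)]

variable [NoZeroDivisors R]

theorem mul_mem_weightIdeal_iff (ha : IsInitialForm w d a p) (hp : p ≠ 0)
    {x : MvPowerSeries σ R} : x * a ∈ weightIdeal R w (n + d) ↔ x ∈ weightIdeal R w n := by
  rw [mem_weightIdeal, mem_weightIdeal, MvPowerSeries.weightedOrder_mul,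
    ha.weightedOrder_eq hp, Nat.cast_add]
  exact ENat.add_le_add_iff_right (ENat.natCast_ne_top d)

theorem exists_mul_eq [Finite σ] (hw : ∀ i, w i ≠ 0) (ha : IsInitialForm w d a p) (hp : p ≠ 0)
    (hba : IsInitialForm w n (b * a) q) (hq : q ≠ 0) :
    ∃ k r, k + d = n ∧ IsInitialForm w k b r ∧ r * p = q := by
  have order_add : b.weightedOrder w + d = n := by
    rw [← hba.weightedOrder_eq hq, MvPowerSeries.weightedOrder_mul, ha.weightedOrder_eq hp]
  obtain ⟨k, hk⟩ : ∃ k : ℕ, b.weightedOrder w = k :=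
    (ENat.ne_top_iff_exists.1 fun h => by simp [h] at order_add).imp fun _ => Eq.symm
  have hkd : k + d = n := by rw [hk] at order_add; exact_mod_cast order_add
  obtain ⟨r, hr⟩ := exists_of_mem_weightIdeal (a := b) hw hk.ge
  exact ⟨k, r, hkd, hr, (hkd ▸ hr.mul ha).unique hba⟩

theorem dvd_of_mul [Finite σ] (hw : ∀ i, w i ≠ 0) (ha : IsInitialForm w d a p) (hp : p ≠ 0)
    (hba : IsInitialForm w n (b * a) q) : p ∣ q := by
  rcases eq_or_ne q 0 with rfl | hq
  · exact dvd_zero p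
  · obtain ⟨_, r, _, _, hr⟩ := ha.exists_mul_eq hw hp hba hq
    exact Dvd.intro_left r hr

theorem exists_mul_of_dvd [Finite σ] (hw : ∀ i, w i ≠ 0) (ha : IsInitialForm w d a p)
    (hp : p ≠ 0) (hq : q.IsWeightedHomogeneous w n) (hpq : p ∣ q) :
    ∃ c, IsInitialForm w n (c * a) q := by
  rcases eq_or_ne q 0 with rfl | hq0
  · exact ⟨0, by simpa using of_coe (isWeightedHomogeneous_zero R w n)⟩
  obtain ⟨c, rfl⟩ := hpq
  have hcp : IsInitialForm w n ((c : MvPowerSeries σ R) * (p : MvPowerSeries σ R)) (p * c) := by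
    rw [← coe_mul, mul_comm c]; exact of_coe hq
  obtain ⟨k, r, rfl, hr, hrp⟩ :=
    (of_coe ha.isWeightedHomogeneous).exists_mul_eq hw hp hcp hq0
  exact ⟨r, hrp ▸ (of_coe hr.isWeightedHomogeneous).mul ha⟩

theorem exists_of_mul [Finite σ] (hw : ∀ i, w i ≠ 0) {u : MvPolynomial σ R}
    (hu : u.IsWeightedHomogeneous w d) (hup : u * p ≠ 0)
    (ha : IsInitialForm w n ((u : MvPowerSeries σ R) * a) (u * p)) :
    ∃ k, k + d = n ∧ IsInitialForm w k a p := by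
  rw [mul_comm (u : MvPowerSeries σ R)] at ha
  obtain ⟨k, r, hk, hr, hru⟩ :=
    (of_coe hu).exists_mul_eq hw (left_ne_zero_of_mul hup) ha hup
  rw [mul_comm u] at hru
  exact ⟨k, hk, mul_right_cancel₀ (left_ne_zero_of_mul hup) hru ▸ hr⟩

end IsInitialForm

end InitialForm

section ColonQuotient

variable {K A : Type*} [Field K] [CommRing A] [Algebra K A]

theorem finrank_quotient_add_finrank_quotient_sup {P Q : Ideal A} {u : A}
    [FiniteDimensional K (A ⧸ Q)] (hu : ∀ x, x * u ∈ Q ↔ x ∈ P) :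
    Module.finrank K (A ⧸ P) + Module.finrank K (A ⧸ (Ideal.span {u} ⊔ Q)) =
      Module.finrank K (A ⧸ Q) := by
  let mulU : (A ⧸ P) →ₗ[A] A ⧸ Q :=
    Submodule.mapQ P Q (LinearMap.mulRight A u) fun x hx => (hu x).2 hx
  let proj : (A ⧸ Q) →ₗ[A] A ⧸ (Ideal.span {u} ⊔ Q) := Submodule.factor le_sup_right
  have mulU_injective : Function.Injective mulU := by
    rw [injective_iff_map_eq_zero]
    rintro ⟨x⟩ hx
    exact (Submodule.Quotient.mk_eq_zero P).2
      ((hu x).1 ((Submodule.Quotient.mk_eq_zero Q).1 hx))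
  have proj_surjective : Function.Surjective proj := Submodule.factor_surjective le_sup_right
  have ker_proj : LinearMap.ker proj = LinearMap.range mulU := by
    have range_mulRight : LinearMap.range (LinearMap.mulRight A u) = Ideal.span {u} := by
      ext x
      simp [Ideal.mem_span_singleton']
    have range_mulU : LinearMap.range mulU = _ := Submodule.range_mapQ ..
    rw [Submodule.ker_mapQ, range_mulU, range_mulRight, Submodule.comap_id, Submodule.map_sup,
      Submodule.mkQ_map_self, sup_bot_eq]
  have rank_nullity := LinearMap.finrank_range_add_finrank_ker (proj.restrictScalars K)
  rw [LinearMap.range_eq_top (f := proj.restrictScalars K).2 proj_surjective,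
    finrank_top] at rank_nullity
  rw [← rank_nullity, add_comm, ← LinearMap.finrank_range_of_inj (f := mulU.restrictScalars K)
    mulU_injective, LinearMap.ker_restrictScalars, ker_proj]
  rfl

theorem finrank_quotient_le_finrank_quotient {I J : Ideal A} [FiniteDimensional K (A ⧸ I)]
    (hIJ : I ≤ J) : Module.finrank K (A ⧸ J) ≤ Module.finrank K (A ⧸ I) :=
  LinearMap.finrank_le_finrank_of_surjective (f := (Submodule.factor hIJ).restrictScalars K)
    (Submodule.factor_surjective hIJ)

theorem le_of_finrank_quotient_eq {I J : Ideal A} [FiniteDimensional K (A ⧸ I)] (hIJ : I ≤ J)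
    (h : Module.finrank K (A ⧸ I) = Module.finrank K (A ⧸ J)) : J ≤ I := by
  have := Module.Finite.of_surjective ((Submodule.factor hIJ).restrictScalars K)
    (Submodule.factor_surjective hIJ)
  have factor_injective : Function.Injective (Submodule.factor hIJ) :=
    (LinearMap.injective_iff_surjective_of_finrank_eq_finrank
      (f := (Submodule.factor hIJ).restrictScalars K) h).2 (Submodule.factor_surjective hIJ)
  intro x hx
  rw [← Submodule.Quotient.mk_eq_zero] at hx ⊢
  exact factor_injective hx

end ColonQuotient

section MaximalIdeal

variable {σ R : Type*}

section CommRing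

variable [CommRing R]

theorem exists_eq_sum_X_mul [Fintype σ] {a : MvPowerSeries σ R}
    (ha : MvPowerSeries.constantCoeff a = 0) :
    ∃ b : σ → MvPowerSeries σ R, a = ∑ i, MvPowerSeries.X i * b i ∧
      ∀ (w : σ → ℕ) (n : ℕ) (i : σ), a ∈ weightIdeal R w (n + w i) → b i ∈ weightIdeal R w n := by
  classical
  -- Every nonconstant monomial is assigned to one of the variables dividing it.
  obtain ⟨v, hv⟩ : ∃ v : (σ →₀ ℕ) → Option σ, ∀ s ≠ 0, ∃ i, v s = some i ∧ s i ≠ 0 := by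
    suffices ∀ s : σ →₀ ℕ, ∃ v, s ≠ 0 → ∃ i, v = some i ∧ s i ≠ 0 from Classical.skolem.1 this
    intro s
    rcases eq_or_ne s 0 with rfl | hs
    · exact ⟨none, fun h => (h rfl).elim⟩
    · obtain ⟨i, hi⟩ := Finsupp.ne_iff.1 hs
      exact ⟨some i, fun _ => ⟨i, rfl, hi⟩⟩
  let b (i : σ) : MvPowerSeries σ R := fun s =>
    if v (s + Finsupp.single i 1) = some i then
      MvPowerSeries.coeff (s + Finsupp.single i 1) a else 0
  have coeff_b (i : σ) (s : σ →₀ ℕ) : MvPowerSeries.coeff s (b i) =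
      if v (s + Finsupp.single i 1) = some i then
        MvPowerSeries.coeff (s + Finsupp.single i 1) a else 0 := rfl
  refine ⟨b, ?_, fun w n i hai => mem_weightIdeal_iff_coeff.2 fun s hs => ?_⟩
  · ext s
    simp only [map_sum, MvPowerSeries.X, MvPowerSeries.coeff_monomial_mul, one_mul, coeff_b]
    rcases eq_or_ne s 0 with rfl | hs
    · simp [ha]
    · obtain ⟨i, hvi, hsi⟩ := hv s hs
      rw [Finset.sum_eq_single_of_mem i (Finset.mem_univ i)]
      · have : Finsupp.single i 1 ≤ s := Finsupp.single_le_iff.2 (Nat.one_le_iff_ne_zero.2 hsi)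
        rw [if_pos this, tsub_add_cancel_of_le this, if_pos hvi]
      · intro j _ hji
        refine ite_eq_right_iff.2 fun hj => if_neg ?_
        rw [tsub_add_cancel_of_le hj, hvi]
        exact fun h => hji (Option.some.inj h).symm
  · rw [coeff_b, mem_weightIdeal_iff_coeff.1 hai _ (by
      simpa [Finsupp.weight_single] using hs), ite_self]

variable [Finite σ]

theorem span_range_X_eq_ker_constantCoeff :
    Ideal.span (Set.range (MvPowerSeries.X : σ → MvPowerSeries σ R)) =
      RingHom.ker MvPowerSeries.constantCoeff := by
  have := Fintype.ofFinite σ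
  refine le_antisymm (Ideal.span_le.2 ?_) fun a ha => ?_
  · rintro _ ⟨i, rfl⟩
    exact MvPowerSeries.constantCoeff_X i
  · obtain ⟨b, rfl, -⟩ := exists_eq_sum_X_mul ha
    exact sum_mem fun i _ => Ideal.mul_mem_right _ _ (Ideal.subset_span ⟨i, rfl⟩)

theorem weightIdeal_le_span_range_X {w : σ → ℕ} {n : ℕ} (hn : 0 < n) :
    weightIdeal R w n ≤ Ideal.span (Set.range MvPowerSeries.X) := by
  rw [span_range_X_eq_ker_constantCoeff]
  exact fun a ha => mem_weightIdeal_iff_coeff.1 ha 0 (by simpa using hn)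

end CommRing

theorem finrank_quotient_span_range_X [Finite σ] [Field R] :
    Module.finrank R
      (MvPowerSeries σ R ⧸ Ideal.span (Set.range (MvPowerSeries.X : σ → MvPowerSeries σ R))) =
      1 := by
  rw [span_range_X_eq_ker_constantCoeff, ← Module.finrank_self R]
  exact ((MvPowerSeries.coeff (R := R) (0 : σ →₀ ℕ)).quotKerEquivOfSurjective
    fun c => ⟨MvPowerSeries.C c, MvPowerSeries.coeff_zero_C c⟩).finrank_eq

end MaximalIdeal

section FiniteColength

variable {σ K : Type*} [Finite σ] [Field K] {w : σ → ℕ} {n : ℕ}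

theorem finiteDimensional_quotient_weightIdeal (hw : ∀ i, w i ≠ 0) (n : ℕ) :
    FiniteDimensional K (MvPowerSeries σ K ⧸ weightIdeal K w n) := by
  have : Finite {s : σ →₀ ℕ // Finsupp.weight w s < n} := Finsupp.finite_of_nat_weight_lt w hw n
  let coeffs : MvPowerSeries σ K →ₗ[K] {s : σ →₀ ℕ // Finsupp.weight w s < n} → K :=
    LinearMap.pi fun s => MvPowerSeries.coeff s.1
  have ker_coeffs : LinearMap.ker coeffs = (weightIdeal K w n).restrictScalars K := by
    ext a
    simp [coeffs, mem_weightIdeal_iff_coeff, LinearMap.mem_ker, funext_iff]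
  have := Module.Finite.equiv coeffs.quotKerEquivRange.symm
  rw [ker_coeffs] at this
  exact this

theorem le_of_forall_le_sup_weightIdeal {I : Ideal (MvPowerSeries σ K)}
    (h : ∀ m, weightIdeal K w n ≤ I ⊔ weightIdeal K w m) : weightIdeal K w n ≤ I := by
  have := Fintype.ofFinite σ
  -- Nakayama: the series of sufficiently large weight lie in `𝔪 • weightIdeal K w n`.
  refine Submodule.le_of_le_smul_of_le_jacobson_bot (IsNoetherian.noetherian _)
    (IsLocalRing.maximalIdeal_le_jacobson ⊥) ((h (n + (∑ i, w i) + 1)).trans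
      (sup_le_sup_left (fun a ha => ?_) I))
  obtain ⟨b, rfl, hb⟩ := exists_eq_sum_X_mul (a := a)
    (mem_weightIdeal_iff_coeff.1 ha 0 (by simp))
  refine sum_mem fun i _ => Submodule.smul_mem_smul ?_ (hb w n i (weightIdeal_antitone ?_ ha))
  · rw [IsLocalRing.mem_maximalIdeal, mem_nonunits_iff, MvPowerSeries.isUnit_iff_constantCoeff]
    simp
  · have := Finset.single_le_sum (fun i _ => (w i).zero_le) (Finset.mem_univ i)
    lia

end FiniteColength

section RelativelyPrime

variable {σ K : Type*} [Finite σ] [Field K] {w : σ → ℕ} {d e n : ℕ}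
  {a b : MvPowerSeries σ K} {g h : MvPolynomial σ K}

theorem exists_sub_mul_mem_weightIdeal_succ (hw : ∀ i, w i ≠ 0) (ha : IsInitialForm w d a g)
    (hb : IsInitialForm w e b h) (hg : g ≠ 0) (hgh : IsRelPrime g h) {x : MvPowerSeries σ K}
    (hx : x ∈ weightIdeal K w n) (hxb : x * b ∈ Ideal.span {a} ⊔ weightIdeal K w (n + e + 1)) :
    ∃ c, x - c * a ∈ weightIdeal K w (n + 1) := by
  obtain ⟨p, hp⟩ := IsInitialForm.exists_of_mem_weightIdeal hw hx
  obtain ⟨_, hya, z, hz, hyz⟩ := Submodule.mem_sup.1 hxb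
  obtain ⟨y, rfl⟩ := Ideal.mem_span_singleton'.1 hya
  have initialForm_ya : IsInitialForm w (n + e) (y * a) (p * h) :=
    (hp.mul hb).congr (by rw [← hyz, sub_add_cancel_left]; exact neg_mem hz)
  have hgp : g ∣ p := hgh.dvd_of_dvd_mul_right (ha.dvd_of_mul hw hg initialForm_ya)
  obtain ⟨c, hc⟩ := ha.exists_mul_of_dvd hw hg hp.isWeightedHomogeneous hgp
  refine ⟨c, ?_⟩
  rw [← sub_sub_sub_cancel_right x (c * a) p]
  exact sub_mem hp.sub_coe_mem hc.sub_coe_mem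

theorem mul_mem_span_sup_weightIdeal_iff (hw : ∀ i, w i ≠ 0) (ha : IsInitialForm w d a g)
    (hb : IsInitialForm w e b h) (hg : g ≠ 0) (hgh : IsRelPrime g h) {x : MvPowerSeries σ K} :
    x * b ∈ Ideal.span {a} ⊔ weightIdeal K w (n + e) ↔
      x ∈ Ideal.span {a} ⊔ weightIdeal K w n := by
  refine ⟨fun hxb => ?_, fun hx => ?_⟩
  · suffices ∀ m ≤ n, ∃ c, x - c * a ∈ weightIdeal K w m by
      obtain ⟨c, hc⟩ := this n le_rfl
      rw [← add_sub_cancel (c * a) x]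
      exact Submodule.add_mem_sup (Ideal.mem_span_singleton'.2 ⟨c, rfl⟩) hc
    intro m hm
    induction m with
    | zero => exact ⟨0, by simp [weightIdeal_zero]⟩
    | succ m ih =>
      obtain ⟨c, hc⟩ := ih (by lia)
      have hcab : c * a * b ∈ Ideal.span {a} := Ideal.mem_span_singleton'.2 ⟨c * b, by ring⟩
      obtain ⟨r, hr⟩ := exists_sub_mul_mem_weightIdeal_succ hw ha hb hg hgh hc (by
        rw [sub_mul]
        exact sub_mem (sup_le_sup_left (weightIdeal_antitone (by lia)) _ hxb)
          (Submodule.mem_sup_left hcab))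
      exact ⟨c + r, by rwa [add_mul, ← sub_sub]⟩
  · obtain ⟨y, hy, z, hz, rfl⟩ := Submodule.mem_sup.1 hx
    rw [add_mul]
    exact Submodule.add_mem_sup (Ideal.mul_mem_right _ _ hy) (mul_mem_weightIdeal hz hb.mem)

end RelativelyPrime

section SlidingSums

variable {M : Type*} [AddCommGroup M]

theorem sum_range_sub_shift_comm (u : ℕ → M) (p d n : ℕ) :
    ∑ i ∈ Finset.range p, (u (n + i + d) - u (n + i)) =
      ∑ k ∈ Finset.range d, (u (n + k + p) - u (n + k)) := by
  have long_sum (r s : ℕ) : ∑ i ∈ Finset.range (r + s), u (n + i) =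
      ∑ i ∈ Finset.range r, u (n + i) + ∑ j ∈ Finset.range s, u (n + j + r) := by
    rw [Finset.sum_range_add]
    simp only [add_assoc, add_comm r]
  rw [Finset.sum_sub_distrib, Finset.sum_sub_distrib, sub_eq_sub_iff_add_eq_add, add_comm,
    ← long_sum, add_comm d, long_sum, add_comm]

theorem sum_sum_mixed_difference_comm (u : ℕ → M) (p q d e n : ℕ) :
    ∑ i ∈ Finset.range p, ∑ j ∈ Finset.range q,
        (u (n + i + j + d + e) - u (n + i + j + d) - (u (n + i + j + e) - u (n + i + j))) =
      ∑ k ∈ Finset.range d, ∑ l ∈ Finset.range e,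
        (u (n + k + l + p + q) - u (n + k + l + p) - (u (n + k + l + q) - u (n + k + l))) := by
  let V (m : ℕ) : M := ∑ j ∈ Finset.range q, (u (m + j + e) - u (m + j))
  calc _ = ∑ i ∈ Finset.range p, (V (n + i + d) - V (n + i)) := by
        simp only [V, ← Finset.sum_sub_distrib, add_right_comm _ d]
    _ = ∑ k ∈ Finset.range d, (V (n + k + p) - V (n + k)) := sum_range_sub_shift_comm V p d n
    _ = _ := by
        simp only [V, sum_range_sub_shift_comm u q e, ← Finset.sum_sub_distrib,
          add_right_comm _ p]

end SlidingSums

theorem eq_apply_zero_of_sum_sum_eq {D : ℕ → ℕ} (hD : Monotone D) {p q N : ℕ} (hp : p ≠ 0)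
    (hq : q ≠ 0)
    (h : ∀ n, ∑ i ∈ Finset.range p, ∑ j ∈ Finset.range q, D (n + i + j) = N) (n : ℕ) :
    D n = D 0 := by
  induction n with
  | zero => rfl
  | succ n ih =>
    have row_le (i : ℕ) : ∑ j ∈ Finset.range q, D (n + i + j) ≤
        ∑ j ∈ Finset.range q, D (n + 1 + i + j) :=
      Finset.sum_le_sum fun j _ => hD (by lia)
    have row_eq := (Finset.sum_eq_sum_iff_of_le fun i _ => row_le i).1
      ((h n).trans (h (n + 1)).symm) 0 (Finset.mem_range.2 hp.bot_lt)
    have entry_eq := (Finset.sum_eq_sum_iff_of_le fun j _ => hD (by lia)).1 row_eq 0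
      (Finset.mem_range.2 hq.bot_lt)
    exact entry_eq.symm.trans ih

section Bezout

variable {σ K : Type*} [Finite σ] [Field K] {w : σ → ℕ} {d e : ℕ}
  {a b : MvPowerSeries σ K} {g h : MvPolynomial σ K}

theorem finiteDimensional_quotient_of_weightIdeal_le (hw : ∀ i, w i ≠ 0) {n : ℕ}
    {I : Ideal (MvPowerSeries σ K)} (hI : weightIdeal K w n ≤ I) :
    FiniteDimensional K (MvPowerSeries σ K ⧸ I) :=
  have := finiteDimensional_quotient_weightIdeal (K := K) hw n
  Module.Finite.of_surjective ((Submodule.factor hI).restrictScalars K)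
    (Submodule.factor_surjective hI)

theorem finrank_quotient_span_pair_sup_weightIdeal (hw : ∀ i, w i ≠ 0)
    (ha : IsInitialForm w d a g) (hb : IsInitialForm w e b h) (hg : g ≠ 0) (hgh : IsRelPrime g h)
    (n : ℕ) :
    Module.finrank K (MvPowerSeries σ K ⧸ (Ideal.span {a, b} ⊔ weightIdeal K w (n + d + e))) +
        Module.finrank K (MvPowerSeries σ K ⧸ weightIdeal K w (n + d)) +
        Module.finrank K (MvPowerSeries σ K ⧸ weightIdeal K w (n + e)) =
      Module.finrank K (MvPowerSeries σ K ⧸ weightIdeal K w (n + d + e)) +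
        Module.finrank K (MvPowerSeries σ K ⧸ weightIdeal K w n) := by
  have (m : ℕ) := finiteDimensional_quotient_weightIdeal (K := K) hw m
  have := finiteDimensional_quotient_of_weightIdeal_le hw
    (le_sup_right : weightIdeal K w (n + d + e) ≤ Ideal.span {a} ⊔ _)
  have count_a (m : ℕ) := finrank_quotient_add_finrank_quotient_sup (K := K) (u := a)
    (P := weightIdeal K w m) (Q := weightIdeal K w (m + d)) fun _ => ha.mul_mem_weightIdeal_iff hg
  have count_b := finrank_quotient_add_finrank_quotient_sup (K := K) (u := b)
    (P := Ideal.span {a} ⊔ weightIdeal K w (n + d))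
    (Q := Ideal.span {a} ⊔ weightIdeal K w (n + d + e))
    fun _ => mul_mem_span_sup_weightIdeal_iff hw ha hb hg hgh
  rw [← sup_assoc, ← Ideal.span_insert, Set.pair_comm] at count_b
  have count_n := count_a n
  have count_ne := count_a (n + e)
  rw [add_right_comm n e d] at count_ne
  lia

end Bezout

section Plane

variable {K : Type*} [Field K] {w : Fin 2 → ℕ} {d e : ℕ}
  {a b : MvPowerSeries (Fin 2) K} {g h : MvPolynomial (Fin 2) K}

theorem finrank_quotient_weightIdeal_mixed_difference (hw : ∀ i, w i ≠ 0) (n : ℕ) :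
    Module.finrank K (MvPowerSeries (Fin 2) K ⧸ weightIdeal K w (n + w 0 + w 1)) +
        Module.finrank K (MvPowerSeries (Fin 2) K ⧸ weightIdeal K w n) =
      Module.finrank K (MvPowerSeries (Fin 2) K ⧸ weightIdeal K w (n + w 0)) +
        Module.finrank K (MvPowerSeries (Fin 2) K ⧸ weightIdeal K w (n + w 1)) + 1 := by
  have relPrime : IsRelPrime (X 0 : MvPolynomial (Fin 2) K) (X 1) := by
    refine X_prime.irreducible.isRelPrime_iff_not_dvd.2 fun h => ?_
    simp [X_dvd_X] at h
  have span_X : Ideal.span {MvPowerSeries.X 0, MvPowerSeries.X 1} =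
      Ideal.span (Set.range (MvPowerSeries.X : Fin 2 → MvPowerSeries (Fin 2) K)) := by
    congr 1; ext; simp [Fin.exists_fin_two, eq_comm]
  have count := finrank_quotient_span_pair_sup_weightIdeal hw
    (IsInitialForm.of_coe (isWeightedHomogeneous_X K w 0))
    (IsInitialForm.of_coe (isWeightedHomogeneous_X K w 1)) (X_ne_zero 0) relPrime n
  rw [coe_X, coe_X, span_X, sup_eq_left.2 (weightIdeal_le_span_range_X _),
    finrank_quotient_span_range_X] at count
  · lia
  · have := hw 0
    lia

theorem sum_sum_finrank_quotient_span_pair_sup (hw : ∀ i, w i ≠ 0) (ha : IsInitialForm w d a g)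
    (hb : IsInitialForm w e b h) (hg : g ≠ 0) (hgh : IsRelPrime g h) (n : ℕ) :
    ∑ i ∈ Finset.range (w 0), ∑ j ∈ Finset.range (w 1),
      Module.finrank K (MvPowerSeries (Fin 2) K ⧸
        (Ideal.span {a, b} ⊔ weightIdeal K w (n + i + j + d + e))) = d * e := by
  let c (m : ℕ) : ℤ := Module.finrank K (MvPowerSeries (Fin 2) K ⧸ weightIdeal K w m)
  have mixed_difference (m : ℕ) :
      c (m + w 0 + w 1) - c (m + w 0) - (c (m + w 1) - c m) = 1 := by
    have := finrank_quotient_weightIdeal_mixed_difference (K := K) hw m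
    zify at this
    linear_combination this
  have finrank_eq (m : ℕ) : (Module.finrank K (MvPowerSeries (Fin 2) K ⧸
      (Ideal.span {a, b} ⊔ weightIdeal K w (m + d + e))) : ℤ) =
        c (m + d + e) - c (m + d) - (c (m + e) - c m) := by
    have := finrank_quotient_span_pair_sup_weightIdeal hw ha hb hg hgh m
    zify at this
    linear_combination this
  zify
  simp only [finrank_eq]
  rw [sum_sum_mixed_difference_comm c]
  simp only [mixed_difference, Finset.sum_const, Finset.card_range, nsmul_eq_mul, mul_one]

theorem finrank_quotient_span_pair_sup_weightIdeal_eq (hw : ∀ i, w i ≠ 0)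
    (ha : IsInitialForm w d a g) (hb : IsInitialForm w e b h) (hg : g ≠ 0) (hgh : IsRelPrime g h)
    (n : ℕ) :
    Module.finrank K
        (MvPowerSeries (Fin 2) K ⧸ (Ideal.span {a, b} ⊔ weightIdeal K w (n + d + e))) =
      Module.finrank K
        (MvPowerSeries (Fin 2) K ⧸ (Ideal.span {a, b} ⊔ weightIdeal K w (0 + d + e))) := by
  refine eq_apply_zero_of_sum_sum_eq (D := fun n => Module.finrank K
    (MvPowerSeries (Fin 2) K ⧸ (Ideal.span {a, b} ⊔ weightIdeal K w (n + d + e))))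
    (fun m n hmn => ?_) (hw 0) (hw 1)
    (sum_sum_finrank_quotient_span_pair_sup hw ha hb hg hgh) n
  have := finiteDimensional_quotient_of_weightIdeal_le hw
    (le_sup_right : weightIdeal K w (n + d + e) ≤ Ideal.span {a, b} ⊔ _)
  exact finrank_quotient_le_finrank_quotient
    (sup_le_sup_left (weightIdeal_antitone (by lia)) (Ideal.span {a, b}))

theorem weightIdeal_le_span_pair (hw : ∀ i, w i ≠ 0) (ha : IsInitialForm w d a g)
    (hb : IsInitialForm w e b h) (hg : g ≠ 0) (hgh : IsRelPrime g h) :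
    weightIdeal K w (d + e) ≤ Ideal.span {a, b} := by
  refine le_of_forall_le_sup_weightIdeal fun m => ?_
  have := finiteDimensional_quotient_of_weightIdeal_le hw
    (le_sup_right : weightIdeal K w (m + d + e) ≤ Ideal.span {a, b} ⊔ _)
  calc weightIdeal K w (d + e)
      ≤ Ideal.span {a, b} ⊔ weightIdeal K w (0 + d + e) := by
        rw [zero_add]; exact le_sup_right
    _ ≤ Ideal.span {a, b} ⊔ weightIdeal K w (m + d + e) :=
        le_of_finrank_quotient_eq (K := K)
          (sup_le_sup_left (weightIdeal_antitone (by lia)) (Ideal.span {a, b}))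
          (finrank_quotient_span_pair_sup_weightIdeal_eq hw ha hb hg hgh m)
    _ ≤ Ideal.span {a, b} ⊔ weightIdeal K w m :=
        sup_le_sup_left (weightIdeal_antitone (by lia)) _

theorem mul_finrank_quotient_span_pair (hw : ∀ i, w i ≠ 0) (ha : IsInitialForm w d a g)
    (hb : IsInitialForm w e b h) (hg : g ≠ 0) (hgh : IsRelPrime g h) :
    w 0 * w 1 * Module.finrank K (MvPowerSeries (Fin 2) K ⧸ Ideal.span {a, b}) = d * e := by
  have stable (n : ℕ) : Module.finrank K
      (MvPowerSeries (Fin 2) K ⧸ (Ideal.span {a, b} ⊔ weightIdeal K w (n + d + e))) =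
        Module.finrank K (MvPowerSeries (Fin 2) K ⧸ Ideal.span {a, b}) := by
    rw [sup_eq_left.2 ((weightIdeal_antitone (by lia)).trans
      (weightIdeal_le_span_pair hw ha hb hg hgh))]
  have count := sum_sum_finrank_quotient_span_pair_sup hw ha hb hg hgh 0
  simpa only [stable, Finset.sum_const, Finset.card_range, smul_eq_mul, ← mul_assoc] using count

end Plane

section Squarefree

variable {σ R : Type*}

theorem totalDegree_pderiv_lt [CommSemiring R] {p : MvPolynomial σ R} {i : σ}
    (h : pderiv i p ≠ 0) : (pderiv i p).totalDegree < p.totalDegree := by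
  obtain ⟨s, hs, hdeg⟩ := Finset.exists_mem_eq_sup (pderiv i p).support
    (support_nonempty.2 h) fun s => s.sum fun _ e => e
  rw [mem_support_iff, coeff_pderiv] at hs
  have degree_le := le_totalDegree (mem_support_iff.2 (left_ne_zero_of_mul hs))
  rw [Finsupp.sum_add_index' (fun _ => rfl) (fun _ _ _ => rfl),
    Finsupp.sum_single_index rfl] at degree_le
  exact (hdeg.trans_lt (Nat.lt_succ_self _)).trans_le degree_le

theorem pderiv_eq_zero_of_dvd_pderiv [CommRing R] [NoZeroDivisors R] {p : MvPolynomial σ R}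
    {i : σ} (h : p ∣ pderiv i p) : pderiv i p = 0 := by
  by_contra h0
  obtain ⟨q, hq⟩ := h
  have hpq : p * q ≠ 0 := hq ▸ h0
  have totalDegree_eq :=
    totalDegree_mul_of_isDomain (left_ne_zero_of_mul hpq) (right_ne_zero_of_mul hpq)
  rw [← hq] at totalDegree_eq
  have := totalDegree_pderiv_lt h0
  lia

theorem eq_C_of_forall_pderiv_eq_zero [CommRing R] [NoZeroDivisors R] [CharZero R]
    {p : MvPolynomial σ R} (h : ∀ i, pderiv i p = 0) : p = C (coeff 0 p) := by
  classical
  ext s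
  rw [coeff_C]
  split_ifs with hs
  · rw [hs]
  · obtain ⟨i, hi⟩ := Finsupp.ne_iff.1 (Ne.symm hs)
    have coeff_eq := coeff_X_mul_pderiv i (p : MvPowerSeries σ R) s
    rw [MvPowerSeries.pderiv_coe, h i, coe_zero, mul_zero, map_zero, coeff_coe] at coeff_eq
    exact (mul_eq_zero.1 coeff_eq.symm).resolve_left (Nat.cast_ne_zero.2 hi)

variable {K : Type*} [Field K] [CharZero K] {g p : MvPolynomial σ K}

theorem exists_not_dvd_pderiv_of_prime (hp : Prime p) : ∃ i, ¬ p ∣ pderiv i p := by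
  by_contra! h
  have hC := eq_C_of_forall_pderiv_eq_zero fun i => pderiv_eq_zero_of_dvd_pderiv (h i)
  refine hp.not_isUnit (hC ▸ (isUnit_iff_ne_zero.2 fun h0 => hp.ne_zero ?_).map C)
  rw [hC, h0, C_0]

theorem exists_not_dvd_pderiv_of_squarefree (hg : Squarefree g) (hp : Prime p) (hpg : p ∣ g) :
    ∃ i, ¬ p ∣ pderiv i g := by
  obtain ⟨q, rfl⟩ := hpg
  refine (exists_not_dvd_pderiv_of_prime hp).imp fun i hi h => ?_
  rw [pderiv_mul, dvd_add_left (dvd_mul_right p _)] at h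
  exact hp.not_isUnit (hg p (mul_dvd_mul_left p ((hp.dvd_or_dvd h).resolve_left hi)))

end Squarefree

section Inflection

/-- The inflection form `f_y² f_xx - 2 f_x f_y f_xy + f_x² f_yy` of a function `f`, for arbitrary
derivations `D₀ = ∂/∂x` and `D₁ = ∂/∂y`, so that it applies to polynomials and to power series. -/
def inflection {R A : Type*} [CommSemiring R] [CommRing A] [Algebra R A]
    (D₀ D₁ : Derivation R A A) (f : A) : A :=
  D₁ f ^ 2 * D₀ (D₀ f) - 2 * D₀ f * D₁ f * D₁ (D₀ f) + D₀ f ^ 2 * D₁ (D₁ f)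

theorem sq_mul_sq_mul_inflection {R A : Type*} [CommSemiring R] [CommRing A] [Algebra R A]
    {D₀ D₁ : Derivation R A A} {x y : A} (h₀x : D₀ x = 1) (h₁x : D₁ x = 0) (h₁y : D₁ y = 1)
    (f : A) :
    x ^ 2 * y ^ 2 * inflection D₀ D₁ f =
      (y * D₁ f) ^ 2 * (x * D₀ (x * D₀ f) - x * D₀ f) -
        2 * (x * D₀ f) * (y * D₁ f) * (y * D₁ (x * D₀ f)) +
        (x * D₀ f) ^ 2 * (y * D₁ (y * D₁ f) - y * D₁ f) := by
  simp only [inflection, Derivation.leibniz, h₀x, h₁x, h₁y, smul_eq_mul]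
  ring

variable {R : Type*} [CommRing R] {w : Fin 2 → ℕ} {d : ℕ} {a : MvPowerSeries (Fin 2) R}
  {p : MvPolynomial (Fin 2) R}

theorem inflection_coe (p : MvPolynomial (Fin 2) R) :
    inflection (MvPowerSeries.pderiv R 0) (MvPowerSeries.pderiv R 1) (p : MvPowerSeries (Fin 2) R) =
      (inflection (pderiv 0) (pderiv 1) p : MvPolynomial (Fin 2) R) := by
  have coe_ofNat : ((2 : MvPolynomial (Fin 2) R) : MvPowerSeries (Fin 2) R) = 2 :=
    map_ofNat coeToMvPowerSeries.ringHom 2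
  simp only [inflection, MvPowerSeries.pderiv_coe, coe_add, coe_mvPolynomial_sub, coe_mul, coe_pow,
    coe_ofNat]

theorem X_sq_mul_X_sq_mul_inflection_pderiv (p : MvPolynomial (Fin 2) R) :
    X 0 ^ 2 * X 1 ^ 2 * inflection (pderiv 0) (pderiv 1) p =
      (X 1 * pderiv 1 p) ^ 2 * (X 0 * pderiv 0 (X 0 * pderiv 0 p) - X 0 * pderiv 0 p) -
        2 * (X 0 * pderiv 0 p) * (X 1 * pderiv 1 p) * (X 1 * pderiv 1 (X 0 * pderiv 0 p)) +
        (X 0 * pderiv 0 p) ^ 2 * (X 1 * pderiv 1 (X 1 * pderiv 1 p) - X 1 * pderiv 1 p) :=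
  sq_mul_sq_mul_inflection (pderiv_X_self 0) (pderiv_X_of_ne (by decide)) (pderiv_X_self 1) p

theorem IsInitialForm.X_sq_mul_X_sq_mul_inflection (ha : IsInitialForm w d a p) :
    IsInitialForm w (d + d + d)
      (((X 0 ^ 2 * X 1 ^ 2 : MvPolynomial (Fin 2) R) : MvPowerSeries (Fin 2) R) *
        inflection (MvPowerSeries.pderiv R 0) (MvPowerSeries.pderiv R 1) a)
      (X 0 ^ 2 * X 1 ^ 2 * inflection (pderiv 0) (pderiv 1) p) := by
  have hA := ha.X_mul_pderiv 0
  have hB := ha.X_mul_pderiv 1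
  have hAA := hA.X_mul_pderiv 0
  have hAB := hA.X_mul_pderiv 1
  have hBB := hB.X_mul_pderiv 1
  rw [coe_mul, coe_pow, coe_pow, coe_X, coe_X, X_sq_mul_X_sq_mul_inflection_pderiv,
    sq_mul_sq_mul_inflection MvPowerSeries.pderiv_X_self
      (MvPowerSeries.pderiv_X_of_ne (by decide)) MvPowerSeries.pderiv_X_self]
  simp only [sq, two_mul, add_mul]
  exact (((hB.mul hB).mul (hAA.sub hA)).sub
    (((hA.mul hB).mul hAB).add ((hA.mul hB).mul hAB))).add ((hA.mul hA).mul (hBB.sub hB))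

theorem IsInitialForm.exists_inflection [IsDomain R] (hw : ∀ i, w i ≠ 0)
    (ha : IsInitialForm w d a p) (hp : inflection (pderiv 0) (pderiv 1) p ≠ 0) :
    ∃ e, e + (2 * w 0 + 2 * w 1) = d + d + d ∧
      IsInitialForm w e (inflection (MvPowerSeries.pderiv R 0) (MvPowerSeries.pderiv R 1) a)
        (inflection (pderiv 0) (pderiv 1) p) := by
  have X_sq (i : Fin 2) : (X i ^ 2 : MvPolynomial (Fin 2) R).IsWeightedHomogeneous w (2 * w i) :=
    (isWeightedHomogeneous_X R w i).pow 2
  exact IsInitialForm.exists_of_mul hw ((X_sq 0).mul (X_sq 1))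
    (mul_ne_zero (mul_ne_zero (pow_ne_zero 2 (X_ne_zero 0)) (pow_ne_zero 2 (X_ne_zero 1))) hp)
    ha.X_sq_mul_X_sq_mul_inflection

end Inflection

section InflectionRelPrime

variable {R : Type*} [CommRing R] {w : Fin 2 → ℕ} {d : ℕ} {g : MvPolynomial (Fin 2) R}

theorem weight_mul_X_mul_pderiv_add (hg : g.IsWeightedHomogeneous w d) :
    (w 0 : MvPolynomial (Fin 2) R) * (X 0 * pderiv 0 g) +
      (w 1 : MvPolynomial (Fin 2) R) * (X 1 * pderiv 1 g) = (d : MvPolynomial (Fin 2) R) * g := by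
  simpa only [Fin.sum_univ_two, nsmul_eq_mul] using hg.sum_weight_X_mul_pderiv

theorem dvd_mul_X_sq_mul_X_sq_mul_inflection_sub (hg : g.IsWeightedHomogeneous w d) :
    g ∣ (w 0 : MvPolynomial (Fin 2) R) ^ 2 *
        (X 0 ^ 2 * X 1 ^ 2 * inflection (pderiv 0) (pderiv 1) g) -
      (w 1 : MvPolynomial (Fin 2) R) *
        ((w 0 : MvPolynomial (Fin 2) R) - (w 1 : MvPolynomial (Fin 2) R)) *
          (X 1 * pderiv 1 g) ^ 3 := by
  have euler := weight_mul_X_mul_pderiv_add hg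
  have euler_A := weight_mul_X_mul_pderiv_add (isWeightedHomogeneous_X_mul_pderiv 0 hg)
  have deriv_euler : (w 0 : MvPolynomial (Fin 2) R) * (X 1 * pderiv 1 (X 0 * pderiv 0 g)) +
      (w 1 : MvPolynomial (Fin 2) R) * (X 1 * pderiv 1 (X 1 * pderiv 1 g)) =
        (d : MvPolynomial (Fin 2) R) * (X 1 * pderiv 1 g) := by
    have := congrArg (fun q => X 1 * pderiv 1 q) euler
    simp only [← nsmul_eq_mul, map_add, map_nsmul, mul_add, mul_smul_comm] at this ⊢
    exact this
  rw [X_sq_mul_X_sq_mul_inflection_pderiv]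
  generalize X 1 * pderiv 1 (X 1 * pderiv 1 g) = BB at *
  generalize X 1 * pderiv 1 (X 0 * pderiv 0 g) = AB at *
  generalize X 0 * pderiv 0 (X 0 * pderiv 0 g) = AA at *
  generalize X 0 * pderiv 0 g = A at *
  generalize X 1 * pderiv 1 g = B at *
  generalize (w 0 : MvPolynomial (Fin 2) R) = u at *
  generalize (w 1 : MvPolynomial (Fin 2) R) = v at *
  refine ⟨d * (B ^ 2 * (d - u) - 2 * B * (d * B - v * BB) + (d * g - 2 * v * B) * (BB - B)),
    ?_⟩
  linear_combination u * B ^ 2 * euler_A - (v * B ^ 2 + 2 * u * A * B) * deriv_euler +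
    ((d - u) * B ^ 2 - 2 * B * (d * B - v * BB) +
      (BB - B) * (u * A + d * g - v * B)) * euler

variable {K : Type*} [Field K] [CharZero K] {g p : MvPolynomial (Fin 2) K}

theorem dvd_X_mul_pderiv_of_dvd_inflection (hw : ∀ i, w i ≠ 0) (hw' : w 0 ≠ w 1)
    (hg : g.IsWeightedHomogeneous w d) (hp : Prime p) (hpg : p ∣ g)
    (hpi : p ∣ inflection (pderiv 0) (pderiv 1) g) (i : Fin 2) : p ∣ X i * pderiv i g := by
  have isUnit_C {c : K} (hc : c ≠ 0) : IsUnit (C c : MvPolynomial (Fin 2) K) :=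
    (isUnit_iff_ne_zero.2 hc).map C
  have hw_unit (j : Fin 2) : IsUnit (w j : MvPolynomial (Fin 2) K) := by
    simpa using isUnit_C (Nat.cast_ne_zero.2 (hw j))
  have hw_sub_unit : IsUnit ((w 0 : MvPolynomial (Fin 2) K) - (w 1 : MvPolynomial (Fin 2) K)) := by
    simpa using isUnit_C (sub_ne_zero.2 (Nat.cast_injective.ne hw'))
  have dvd_B : p ∣ X 1 * pderiv 1 g := by
    have := (dvd_sub_right ((hpi.mul_left _).mul_left _)).1
      (hpg.trans (dvd_mul_X_sq_mul_X_sq_mul_inflection_sub hg))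
    rw [((hw_unit 1).mul hw_sub_unit).dvd_mul_left] at this
    exact hp.dvd_of_dvd_pow this
  have dvd_A : p ∣ X 0 * pderiv 0 g := by
    have := hpg.mul_left (d : MvPolynomial (Fin 2) K)
    rwa [← weight_mul_X_mul_pderiv_add hg, dvd_add_left (dvd_B.mul_left _),
      (hw_unit 0).dvd_mul_left] at this
  fin_cases i
  exacts [dvd_A, dvd_B]

theorem isRelPrime_inflection (hw : ∀ i, w i ≠ 0) (hw' : w 0 ≠ w 1)
    (hg : g.IsWeightedHomogeneous w d) (hX : ∀ i, ¬ X i ∣ g) (hsf : Squarefree g) :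
    IsRelPrime g (inflection (pderiv 0) (pderiv 1) g) := by
  refine WfDvdMonoid.isRelPrime_of_no_irreducible_factors (fun h => hsf.ne_zero h.1)
    fun p hp hpg hpi => ?_
  obtain ⟨i, hi⟩ := exists_not_dvd_pderiv_of_squarefree hsf hp.prime hpg
  have hpX : p ∣ X i := (hp.prime.dvd_or_dvd
    (dvd_X_mul_pderiv_of_dvd_inflection hw hw' hg hp.prime hpg hpi i)).resolve_right hi
  exact hX i (((hp.prime.associated_of_dvd X_prime hpX).dvd_iff_dvd_left).1 hpg)

theorem not_isUnit_of_isWeightedHomogeneous {σ R : Type*} [CommRing R] [Nontrivial R] {w : σ → ℕ}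
    {d : ℕ} {g : MvPolynomial σ R} (hg : g.IsWeightedHomogeneous w d) (hd : d ≠ 0) :
    ¬ IsUnit g := fun h => by
  have := h.map (constantCoeff (σ := σ) (R := R))
  rw [constantCoeff_eq, hg.coeff_eq_zero 0 (by simpa using hd.symm)] at this
  exact not_isUnit_zero this

end InflectionRelPrime

theorem isInitialForm_of_support {R : Type*} [CommRing R] {f g : MvPolynomial (Fin 2) R}
    {w₁ w₂ d : ℕ} (hg : ∀ α ∈ g.support, w₁ * α 0 + w₂ * α 1 = d)
    (hfg : ∀ α ∈ (f - g).support, d < w₁ * α 0 + w₂ * α 1) :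
    IsInitialForm ![w₁, w₂] d (f : MvPowerSeries (Fin 2) R) g := by
  have weight_eq (α : Fin 2 →₀ ℕ) : Finsupp.weight ![w₁, w₂] α = w₁ * α 0 + w₂ * α 1 := by
    simp [Finsupp.weight_apply, Finsupp.sum_fintype, mul_comm]
  refine ⟨fun α hα => (weight_eq α).trans (hg α (mem_support_iff.2 hα)), ?_⟩
  rw [← coe_mvPolynomial_sub, mem_weightIdeal_iff_coeff]
  intro α weight_le
  rw [coeff_coe, ← notMem_support_iff]
  intro mem_support
  have := hfg α mem_support
  rw [weight_eq] at weight_le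
  lia

theorem inflection_number_semiquasihomogeneous_general {K : Type*} [Field K] [CharZero K]
    {w : Fin 2 → ℕ} {d : ℕ} {f : MvPowerSeries (Fin 2) K} {g : MvPolynomial (Fin 2) K}
    (hw : ∀ i, w i ≠ 0) (hw' : w 0 ≠ w 1) (hd : d ≠ 0) (hf : IsInitialForm w d f g)
    (hX : ∀ i, ¬ X i ∣ g) (hsf : Squarefree g) :
    FiniteDimensional K (MvPowerSeries (Fin 2) K ⧸ Ideal.span
        {f, inflection (MvPowerSeries.pderiv K 0) (MvPowerSeries.pderiv K 1) f}) ∧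
      w 0 * w 1 * Module.finrank K (MvPowerSeries (Fin 2) K ⧸ Ideal.span
        {f, inflection (MvPowerSeries.pderiv K 0) (MvPowerSeries.pderiv K 1) f}) =
      d * (3 * d - 2 * w 0 - 2 * w 1) := by
  have relPrime := isRelPrime_inflection hw hw' hf.isWeightedHomogeneous hX hsf
  have inflection_ne_zero : inflection (pderiv 0) (pderiv 1) g ≠ 0 := fun h =>
    not_isUnit_of_isWeightedHomogeneous hf.isWeightedHomogeneous hd
      (isRelPrime_zero_right.1 (h ▸ relPrime))
  obtain ⟨e, he, hinfl⟩ := hf.exists_inflection hw inflection_ne_zero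
  refine ⟨finiteDimensional_quotient_of_weightIdeal_le hw
    (weightIdeal_le_span_pair hw hf hinfl hsf.ne_zero relPrime), ?_⟩
  rw [mul_finrank_quotient_span_pair hw hf hinfl hsf.ne_zero relPrime,
    show e = 3 * d - 2 * w 0 - 2 * w 1 by lia]

/-- **Proposition 4.6.** Let `f` be semi-quasihomogeneous with quasihomogeneous part
`g` of weighted degree `d` with respect to coprime weights `w₁ ≠ w₂` (both `≥ 1`),
where `g` is squarefree, not divisible by `X` nor by `Y`, and every term of `f − g`
has weight `> d`. Then `I_f` is finite and `I_f = d(3d − 2w₁ − 2w₂)/(w₁w₂)`. -/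
theorem inflection_number_semiquasihomogeneous
    (f g : MvPolynomial (Fin 2) ℂ) (w₁ w₂ d : ℕ)
    (hw₁ : 1 ≤ w₁) (hw₂ : 1 ≤ w₂) (hcop : Nat.gcd w₁ w₂ = 1) (hw : w₁ ≠ w₂) (hd : 0 < d)
    (hg0 : g ≠ 0)
    (hgqh : ∀ α ∈ g.support, w₁ * α 0 + w₂ * α 1 = d)
    (hfg : ∀ α ∈ (f - g).support, w₁ * α 0 + w₂ * α 1 > d)
    (hX : ¬ (MvPolynomial.X 0 : MvPolynomial (Fin 2) ℂ) ∣ g)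
    (hY : ¬ (MvPolynomial.X 1 : MvPolynomial (Fin 2) ℂ) ∣ g)
    (hsf : Squarefree g) :
    FiniteDimensional ℂ
        (MvPowerSeries (Fin 2) ℂ ⧸ Ideal.span {ι f, ι (infl f)}) ∧
    w₁ * w₂ * Module.finrank ℂ
        (MvPowerSeries (Fin 2) ℂ ⧸ Ideal.span {ι f, ι (infl f)})
      = d * (3 * d - 2 * w₁ - 2 * w₂) := by
  have general := inflection_number_semiquasihomogeneous_general (w := ![w₁, w₂])
    (Fin.forall_fin_two.2 ⟨Nat.one_le_iff_ne_zero.1 hw₁, Nat.one_le_iff_ne_zero.1 hw₂⟩) hw hd.ne'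
    (isInitialForm_of_support hgqh hfg) (Fin.forall_fin_two.2 ⟨hX, hY⟩) hsf
  rwa [inflection_coe] at general
end
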